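/- arXiv:1410.4315 — 2 statements merged into one kernel-verified Lean document; each statement's English description precedes it below -/
import Mathlib

section
/- Let p ∈ [1,∞), n ∈ ℕ, σ ∈ {0,1}^n, and N = 2^{n+1}. Then the L_p-discrepancies of the symmetrized point set R_{n,σ}^{sym} and of the multiset ~R_{n,σ}^{sym} satisfy |L_{p,N}(~R_{n,σ}^{sym}) − L_{p,N}(R_{n,σ}^{sym})| ≤ 1/2^{n+1} = 1/N. -/
open MeasureTheory

/-- The real value of a binary digit. -/
noncomputable def bval (b : Bool) : ℝ := if b then 1 else 0

/-- The two-dimensional digit shifted Hammersley point set with `2^n` points,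
indexed by the digit vectors `t : Fin n → Bool`.  The index `i : Fin n`
corresponds to the digit `t_{i+1}` of the paper. -/
noncomputable def hammersleyShifted (n : ℕ) (σ : Fin n → Bool) (t : Fin n → Bool) : ℝ × ℝ :=
  (∑ i : Fin n, bval (t i) / 2 ^ (n - i.val),
   ∑ i : Fin n, bval (t i != σ i) / 2 ^ (i.val + 1))

/-- Number of points of the (indexed) point set `P` lying in `[0,t₁) × [0,t₂)`. -/
noncomputable def countIn {ι : Type*} [Fintype ι] (P : ι → ℝ × ℝ) (t : ℝ × ℝ) : ℕ :=
  (Finset.univ.filter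
    (fun k => 0 ≤ (P k).1 ∧ (P k).1 < t.1 ∧ 0 ≤ (P k).2 ∧ (P k).2 < t.2)).card

/-- The local discrepancy `D_N(P,t) = A_N([0,t),P)/N - t₁t₂` of an indexed point set. -/
noncomputable def localDisc {ι : Type*} [Fintype ι] (P : ι → ℝ × ℝ) (t : ℝ × ℝ) : ℝ :=
  (countIn P t : ℝ) / (Fintype.card ι) - t.1 * t.2

/-- The `L_p`-discrepancy of an indexed point set. -/
noncomputable def LpDisc (p : ℝ) {ι : Type*} [Fintype ι] (P : ι → ℝ × ℝ) : ℝ :=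
  (∫ t in Set.Icc (0 : ℝ × ℝ) 1, |localDisc P t| ^ p) ^ (1 / p)

/-- One-dimensional `L∞`-normalized Haar function `h_{j,m}`, with `j ∈ ℤ`, `j = -1`
giving the indicator of `[0,1)` and `j ≥ 0` the usual Haar function on `I_{j,m}`. -/
noncomputable def haar1 (j : ℤ) (m : ℕ) (x : ℝ) : ℝ :=
  if j = -1 then (if 0 ≤ x ∧ x < 1 then 1 else 0)
  else if (2 * m : ℝ) / 2 ^ (j.toNat + 1) ≤ x ∧ x < (2 * m + 1 : ℝ) / 2 ^ (j.toNat + 1) then 1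
  else if (2 * m + 1 : ℝ) / 2 ^ (j.toNat + 1) ≤ x ∧ x < (2 * m + 2 : ℝ) / 2 ^ (j.toNat + 1) then -1
  else 0

/-- Two-dimensional (tensor product) Haar function. -/
noncomputable def haar2 (j : ℤ × ℤ) (m : ℕ × ℕ) (x : ℝ × ℝ) : ℝ :=
  haar1 j.1 m.1 x.1 * haar1 j.2 m.2 x.2

/-- One-dimensional dyadic interval `I_{j,m}` (with `I_{-1,0} = [0,1)`). -/
noncomputable def dyadicI (j : ℤ) (m : ℕ) : Set ℝ :=
  if j = -1 then Set.Ico (0 : ℝ) 1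
  else Set.Ico ((m : ℝ) / 2 ^ j.toNat) ((m + 1 : ℝ) / 2 ^ j.toNat)

/-- Haar coefficient `μ_{j,m} = ∫_{[0,1]²} D_N(P,t) h_{j,m}(t) dt` of the local
discrepancy of an indexed point set. -/
noncomputable def haarCoeff {ι : Type*} [Fintype ι] (P : ι → ℝ × ℝ) (j : ℤ × ℤ) (m : ℕ × ℕ) : ℝ :=
  ∫ t in Set.Icc (0 : ℝ × ℝ) 1, localDisc P t * haar2 j m t

/-- Number of zero components of the shift `σ`. -/
noncomputable def zeroCount {n : ℕ} (σ : Fin n → Bool) : ℕ :=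
  (Finset.univ.filter (fun j => σ j = false)).card

/-- The symmetrized digit shifted Hammersley point set `R_{n,σ} ∪ R_{n,σ⊕1}`
with `2^(n+1)` points, indexed by `Bool × (Fin n → Bool)`. -/
noncomputable def hammersleySym (n : ℕ) (σ : Fin n → Bool) :
    Bool × (Fin n → Bool) → ℝ × ℝ :=
  fun bt => if bt.1 then hammersleyShifted n (fun i => !(σ i)) bt.2
            else hammersleyShifted n σ bt.2

/-- The multiset `R_{n,σ} ∪ {(x, 1-y) : (x,y) ∈ R_{n,σ}}` with `2^(n+1)` points
(counted with multiplicity), indexed by `Bool × (Fin n → Bool)`. -/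
noncomputable def hammersleySymTilde (n : ℕ) (σ : Fin n → Bool) :
    Bool × (Fin n → Bool) → ℝ × ℝ :=
  fun bt => if bt.1 then ((hammersleyShifted n σ bt.2).1, 1 - (hammersleyShifted n σ bt.2).2)
            else hammersleyShifted n σ bt.2

/-!
The reflection `y ↦ 1 - y` takes a binary fraction with `n` digits to the fraction with complemented
digits plus `2⁻ⁿ`. So the two point sets share `R_{n,σ}`, and their other halves are `R_{n,σ*}` and
its vertical translate by `2⁻ⁿ`. Distinct points of `R_{n,σ*}` have heights at least `2⁻ⁿ` apart, so
this translation moves at most one point across the upper edge of any given anchored box. Hence the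
local discrepancies differ by at most `1 / N`, uniformly in the box, and the claim follows from the
triangle inequality in `L_p` of the unit square.
-/

/-- The finite binary fraction `0.c₀c₁…cₙ₋₁`, the most significant digit having index `0`. It is the
second coordinate of the points of a shifted Hammersley set. -/
noncomputable def binaryFraction {n : ℕ} (c : Fin n → Bool) : ℝ :=
  ∑ i : Fin n, bval (c i) / 2 ^ (i.val + 1)

section BinaryFraction

variable {n : ℕ}

lemma bval_nonneg (b : Bool) : 0 ≤ bval b := by
  cases b <;> simp [bval]

lemma bval_add_bval_not (b : Bool) : bval b + bval (!b) = 1 := by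
  cases b <;> simp [bval]

lemma abs_bval_sub_bval_of_ne {a b : Bool} (hab : a ≠ b) : |bval a - bval b| = 1 := by
  cases a <;> cases b <;> simp [bval] at hab ⊢

lemma binaryFraction_succ (c : Fin (n + 1) → Bool) :
    binaryFraction c = (bval (c 0) + binaryFraction (Fin.tail c)) / 2 := by
  simp only [binaryFraction, Fin.sum_univ_succ, Fin.val_zero, Fin.val_succ, zero_add, pow_one,
    pow_succ _ (_ + 1), Fin.tail, ← div_div, ← Finset.sum_div, add_div]

lemma binaryFraction_nonneg (c : Fin n → Bool) : 0 ≤ binaryFraction c :=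
  Finset.sum_nonneg fun i _ => div_nonneg (bval_nonneg (c i)) (by positivity)

lemma binaryFraction_add_binaryFraction_not (c : Fin n → Bool) :
    binaryFraction c + binaryFraction (fun i => !c i) = 1 - 1 / 2 ^ n := by
  induction n with
  | zero => simp [binaryFraction]
  | succ n ih =>
    have htail : binaryFraction (Fin.tail c) + binaryFraction (Fin.tail fun i => !c i) =
        1 - 1 / 2 ^ n := ih (Fin.tail c)
    rw [binaryFraction_succ, binaryFraction_succ, pow_succ, ← div_div]
    linarith [bval_add_bval_not (c 0)]

lemma binaryFraction_le (c : Fin n → Bool) : binaryFraction c ≤ 1 - 1 / 2 ^ n := by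
  linarith [binaryFraction_add_binaryFraction_not c, binaryFraction_nonneg fun i => !c i]

lemma abs_binaryFraction_sub_le (c d : Fin n → Bool) :
    |binaryFraction c - binaryFraction d| ≤ 1 - 1 / 2 ^ n :=
  abs_sub_le_of_nonneg_of_le (binaryFraction_nonneg c) (binaryFraction_le c)
    (binaryFraction_nonneg d) (binaryFraction_le d)

lemma one_div_two_pow_le_abs_binaryFraction_sub {c d : Fin n → Bool} (hcd : c ≠ d) :
    1 / 2 ^ n ≤ |binaryFraction c - binaryFraction d| := by
  induction n with
  | zero => exact absurd (Subsingleton.elim c d) hcd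
  | succ n ih =>
    set x := bval (c 0) - bval (d 0)
    set y := binaryFraction (Fin.tail c) - binaryFraction (Fin.tail d)
    have hsub : binaryFraction c - binaryFraction d = (x + y) / 2 := by
      rw [binaryFraction_succ, binaryFraction_succ]
      ring
    suffices 1 / 2 ^ n ≤ |x + y| by
      rw [hsub, abs_div, abs_two, pow_succ, ← div_div]
      gcongr
    by_cases hhead : c 0 = d 0
    · have htail : Fin.tail c ≠ Fin.tail d := fun h =>
        hcd (by rw [← Fin.cons_self_tail c, ← Fin.cons_self_tail d, hhead, h])
      simpa [x, hhead] using ih htail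
    · have hx : |x| = 1 := abs_bval_sub_bval_of_ne hhead
      have hy : |y| ≤ 1 - 1 / 2 ^ n := abs_binaryFraction_sub_le _ _
      linarith [abs_sub_abs_le_abs_add x y]

end BinaryFraction

section Hammersley

variable {n : ℕ} (σ : Fin n → Bool)

lemma hammersleyShifted_snd (t : Fin n → Bool) :
    (hammersleyShifted n σ t).2 = binaryFraction fun i => t i != σ i :=
  rfl

lemma hammersleyShifted_snd_nonneg (t : Fin n → Bool) : 0 ≤ (hammersleyShifted n σ t).2 :=
  binaryFraction_nonneg _

lemma pairwise_one_div_two_pow_le_abs_hammersleyShifted_snd_sub :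
    Pairwise fun s t : Fin n → Bool =>
      1 / 2 ^ n ≤ |(hammersleyShifted n σ s).2 - (hammersleyShifted n σ t).2| := by
  intro s t hst
  refine one_div_two_pow_le_abs_binaryFraction_sub fun h => hst (funext fun i => ?_)
  exact Bool.bne_left_inj.1 (congrFun h i)

lemma hammersleyShifted_reflect (t : Fin n → Bool) :
    ((hammersleyShifted n σ t).1, 1 - (hammersleyShifted n σ t).2) =
      hammersleyShifted n (fun i => !σ i) t + (0, 1 / 2 ^ n) := by
  refine Prod.ext (add_zero _).symm ?_
  have hsum := binaryFraction_add_binaryFraction_not fun i => t i != σ i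
  simp only [Prod.snd_add, hammersleyShifted_snd, Bool.bne_not]
  linarith

end Hammersley

section Counting

variable {ι κ : Type*} [Fintype ι] [Fintype κ]

lemma countIn_prod (P : κ × ι → ℝ × ℝ) (t : ℝ × ℝ) :
    countIn P t = ∑ b, countIn (fun k => P (b, k)) t := by
  simp only [countIn, Finset.card_filter, Fintype.sum_prod_type]

lemma countIn_add_vertical_le {P : ι → ℝ × ℝ} (hP : ∀ k, 0 ≤ (P k).2) {δ : ℝ} (hδ : 0 ≤ δ)
    (t : ℝ × ℝ) : countIn (fun k => P k + (0, δ)) t ≤ countIn P t := by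
  refine Finset.card_le_card (Finset.monotone_filter_right _ fun k _ hk => ?_)
  simp only [Prod.fst_add, Prod.snd_add, add_zero] at hk
  exact ⟨hk.1, hk.2.1, hP k, by linarith [hk.2.2.2]⟩

lemma countIn_le_countIn_add_vertical_add_one {P : ι → ℝ × ℝ} {δ : ℝ} (hδ : 0 ≤ δ)
    (hsep : Pairwise fun k l => δ ≤ |(P k).2 - (P l).2|) (t : ℝ × ℝ) :
    countIn P t ≤ countIn (fun k => P k + (0, δ)) t + 1 := by
  classical
  let crossing : Finset ι := {k | (P k).2 < t.2 ∧ t.2 ≤ (P k).2 + δ}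
  have hcrossing : crossing.card ≤ 1 := by
    refine Finset.card_le_one.2 fun k hk l hl => by_contra fun hkl => (hsep hkl).not_gt ?_
    simp only [crossing, Finset.mem_filter, Finset.mem_univ, true_and] at hk hl
    exact abs_sub_lt_iff.2 ⟨by linarith, by linarith⟩
  refine (Finset.card_le_card fun k hk => ?_).trans
    ((Finset.card_union_le _ crossing).trans (Nat.add_le_add_left hcrossing _))
  simp only [crossing, Finset.mem_union, Finset.mem_filter, Finset.mem_univ, true_and,
    Prod.fst_add, Prod.snd_add, add_zero] at hk ⊢
  obtain ⟨hfst, hfst_lt, hsnd, hsnd_lt⟩ := hk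
  rcases lt_or_ge ((P k).2 + δ) t.2 with hlt | hge
  · exact Or.inl ⟨hfst, hfst_lt, add_nonneg hsnd hδ, hlt⟩
  · exact Or.inr ⟨hsnd_lt, hge⟩

lemma abs_localDisc_sub_localDisc (P Q : ι → ℝ × ℝ) (t : ℝ × ℝ) :
    |localDisc P t - localDisc Q t| =
      |(countIn P t : ℝ) - countIn Q t| / Fintype.card ι := by
  rw [localDisc, localDisc, sub_sub_sub_cancel_right, ← sub_div, abs_div, Nat.abs_cast]

end Counting

lemma countIn_hammersleySym {n : ℕ} (σ : Fin n → Bool) (t : ℝ × ℝ) :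
    countIn (hammersleySym n σ) t =
      countIn (hammersleyShifted n fun i => !σ i) t + countIn (hammersleyShifted n σ) t := by
  rw [countIn_prod, Fintype.sum_bool]
  rfl

lemma countIn_hammersleySymTilde {n : ℕ} (σ : Fin n → Bool) (t : ℝ × ℝ) :
    countIn (hammersleySymTilde n σ) t =
      countIn (fun k => hammersleyShifted n (fun i => !σ i) k + (0, 1 / 2 ^ n)) t +
        countIn (hammersleyShifted n σ) t := by
  simp only [countIn_prod, Fintype.sum_bool, hammersleySymTilde, if_true, Bool.false_eq_true,
    if_false, hammersleyShifted_reflect]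

lemma abs_localDisc_hammersleySymTilde_sub_le {n : ℕ} (σ : Fin n → Bool) (t : ℝ × ℝ) :
    |localDisc (hammersleySymTilde n σ) t - localDisc (hammersleySym n σ) t| ≤
      1 / 2 ^ (n + 1) := by
  have hδ : (0 : ℝ) ≤ 1 / 2 ^ n := by positivity
  have hle : countIn (hammersleySymTilde n σ) t ≤ countIn (hammersleySym n σ) t := by
    rw [countIn_hammersleySymTilde, countIn_hammersleySym]
    gcongr
    exact countIn_add_vertical_le (hammersleyShifted_snd_nonneg _) hδ t
  have hge : countIn (hammersleySym n σ) t ≤ countIn (hammersleySymTilde n σ) t + 1 := by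
    rw [countIn_hammersleySymTilde, countIn_hammersleySym, add_right_comm]
    gcongr
    exact countIn_le_countIn_add_vertical_add_one hδ
      (pairwise_one_div_two_pow_le_abs_hammersleyShifted_snd_sub _) t
  have hcard : (Fintype.card (Bool × (Fin n → Bool)) : ℝ) = 2 ^ (n + 1) := by
    simp [pow_succ, mul_comm]
  rw [abs_localDisc_sub_localDisc, hcard]
  gcongr
  rify at hle hge
  exact abs_sub_le_iff.2 ⟨by linarith, by linarith⟩

section LpNorm

open scoped ENNReal

variable {α E : Type*} [MeasurableSpace α] {μ : Measure α} [NormedAddCommGroup E] {f g : α → E}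
  {p : ℝ≥0∞}

lemma abs_lpNorm_sub_lpNorm_le (hf : MemLp f p μ) (hg : MemLp g p μ) (hp : 1 ≤ p) :
    |lpNorm f p μ - lpNorm g p μ| ≤ lpNorm (f - g) p μ :=
  abs_sub_le_iff.2
    ⟨sub_le_iff_le_add'.2 (lpNorm_le_lpNorm_add_lpNorm_sub' hg hp),
      sub_le_iff_le_add'.2 (lpNorm_le_lpNorm_add_lpNorm_sub hf hp)⟩

lemma lpNorm_le_of_ae_bound [IsProbabilityMeasure μ] {C : ℝ} (hfC : ∀ᵐ x ∂μ, ‖f x‖ ≤ C) :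
    lpNorm f p μ ≤ C := by
  obtain ⟨x, hx⟩ := hfC.exists
  have hC : 0 ≤ C := (norm_nonneg _).trans hx
  by_cases hf : AEStronglyMeasurable f μ
  · rw [← toReal_eLpNorm hf]
    refine ENNReal.toReal_le_of_le_ofReal hC ?_
    simpa only [measure_univ, ENNReal.one_rpow, one_mul] using eLpNorm_le_of_ae_bound hfC
  · rwa [lpNorm_of_not_aestronglyMeasurable hf]

end LpNorm

section LpDisc

variable {ι κ : Type*} [Fintype ι] [Fintype κ]

instance isProbabilityMeasure_volume_restrict_unitSquare :
    IsProbabilityMeasure (volume.restrict (Set.Icc (0 : ℝ × ℝ) 1)) := by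
  constructor
  rw [Measure.restrict_apply_univ, ← Prod.mk_zero_zero, ← Prod.mk_one_one, ← Set.Icc_prod_Icc,
    Measure.volume_eq_prod, Measure.prod_prod, Real.volume_Icc]
  simp

lemma measurable_countIn (P : ι → ℝ × ℝ) : Measurable (countIn P) := by
  unfold countIn
  simp only [Finset.card_filter]
  refine Finset.measurable_fun_sum _ fun k _ => ?_
  exact Measurable.ite (by measurability) measurable_const measurable_const

lemma measurable_localDisc (P : ι → ℝ × ℝ) : Measurable (localDisc P) :=
  ((measurable_from_top.comp (measurable_countIn P)).div_const _).sub
    (measurable_fst.mul measurable_snd)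

lemma abs_localDisc_le_one (P : ι → ℝ × ℝ) {t : ℝ × ℝ} (ht : t ∈ Set.Icc (0 : ℝ × ℝ) 1) :
    |localDisc P t| ≤ 1 := by
  obtain ⟨⟨hfst_nonneg, hsnd_nonneg⟩, hfst_le, hsnd_le⟩ := ht
  have hcount : (countIn P t : ℝ) ≤ Fintype.card ι := by exact_mod_cast Finset.card_le_univ _
  exact abs_sub_le_of_nonneg_of_le (by positivity)
    (div_le_one_of_le₀ hcount (Nat.cast_nonneg _))
    (mul_nonneg hfst_nonneg hsnd_nonneg) (mul_le_one₀ hfst_le hsnd_nonneg hsnd_le)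

lemma memLp_localDisc (P : ι → ℝ × ℝ) (p : ENNReal) :
    MemLp (localDisc P) p (volume.restrict (Set.Icc (0 : ℝ × ℝ) 1)) :=
  MemLp.of_bound (measurable_localDisc P).aestronglyMeasurable 1 <|
    ae_restrict_of_forall_mem measurableSet_Icc fun _ => abs_localDisc_le_one P

lemma LpDisc_eq_lpNorm {p : ℝ} (hp : 0 < p) (P : ι → ℝ × ℝ) :
    LpDisc p P =
      lpNorm (localDisc P) (ENNReal.ofReal p) (volume.restrict (Set.Icc (0 : ℝ × ℝ) 1)) := by
  rw [lpNorm_eq_integral_norm_rpow_toReal (ENNReal.ofReal_pos.2 hp).ne' ENNReal.ofReal_ne_top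
    (measurable_localDisc P).aestronglyMeasurable, ENNReal.toReal_ofReal hp.le]
  simp only [LpDisc, Real.norm_eq_abs, one_div]

lemma abs_LpDisc_sub_LpDisc_le {p : ℝ} (hp : 1 ≤ p) (P : ι → ℝ × ℝ) (Q : κ → ℝ × ℝ) {C : ℝ}
    (hC : ∀ t ∈ Set.Icc (0 : ℝ × ℝ) 1, |localDisc P t - localDisc Q t| ≤ C) :
    |LpDisc p P - LpDisc p Q| ≤ C := by
  have hp₀ : 0 < p := one_pos.trans_le hp
  rw [LpDisc_eq_lpNorm hp₀, LpDisc_eq_lpNorm hp₀]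
  refine (abs_lpNorm_sub_lpNorm_le (memLp_localDisc P _) (memLp_localDisc Q _)
    (ENNReal.one_le_ofReal.2 hp)).trans ?_
  exact lpNorm_le_of_ae_bound (ae_restrict_of_forall_mem measurableSet_Icc hC)

end LpDisc

/-- The `L_p`-discrepancies of `R_{n,σ}^{sym}` and of the multiset `~R_{n,σ}^{sym}`
differ by at most `2^{-(n+1)} = 1/N`. -/
theorem statement18 (p : ℝ) (hp : 1 ≤ p) (n : ℕ) (hn : 0 < n) (σ : Fin n → Bool) :
    |LpDisc p (hammersleySymTilde n σ) - LpDisc p (hammersleySym n σ)| ≤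
      1 / 2 ^ (n + 1) := by
  exact abs_LpDisc_sub_LpDisc_le hp _ _ fun t _ => abs_localDisc_hammersleySymTilde_sub_le σ t
end

section
/- Let p ∈ (1,∞). For every constant c ≥ 0 there exists a constant C_{p,c} > 0 such that for all n ∈ ℕ and all σ ∈ {0,1}^n with |2a_n − n| ≤ c√n (where a_n = #{j : σ_j = 0}), the Haar coefficients μ_{j,m} of the local discrepancy of R_{n,σ} (with N = 2^n points) satisfy Σ_{j ∈ ℕ_{−1}^2} 2^{2|j|} ‖ Σ_{m ∈ D_j} μ_{j,m}² 1_{I_{j,m}} ‖_{L_{p/2}} ≤ C_{p,c} · n/2^{2n}. -/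
open MeasureTheory

/-- The summand `2^{2|j|} ‖ Σ_{m ∈ D_j} μ_{j,m}² 1_{I_{j,m}} ‖_{L_{p/2}}` for a fixed
shape `j ∈ ℕ_{-1}²`, where `‖g‖_{L_{p/2}} = (∫ |g|^{p/2})^{2/p}` on `[0,1]²`. -/
noncomputable def lpHalfTerm (p : ℝ) {ι : Type*} [Fintype ι] (P : ι → ℝ × ℝ)
    (j : ℤ × ℤ) : ℝ :=
  2 ^ (2 * (j.1.toNat + j.2.toNat)) *
    (∫ x in Set.Icc (0 : ℝ × ℝ) 1,
        |∑ m1 ∈ Finset.range (2 ^ j.1.toNat), ∑ m2 ∈ Finset.range (2 ^ j.2.toNat),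
            haarCoeff P j (m1, m2) ^ 2 *
              Set.indicator (dyadicI j.1 m1 ×ˢ dyadicI j.2 m2) (fun _ => (1 : ℝ)) x| ^
          (p / 2)) ^ (2 / p)

/-!
The Haar coefficients are explicit: a point `(x, y)` contributes the product of the tent functions
over the sides of `I_{j,m}`, evaluated at `x` and `y`, and the volume part contributes a constant.
Since `I_{j,m}` prescribes leading binary digits of the points it contains, removing these digits
turns a tent sum of shape `j` over `2^n` points into one of a smaller shape over fewer points.

* For `|j| + 2 ≤ n` this reduces everything to the shape `(0, 0)`, where the two outermost digits
  force an almost complete cancellation against the volume part: `|μ_{j,m}| ≤ 4^{-n}`.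
* For `|j| + 1 ≥ n` at most two points remain, so `|μ_{j,m}| ≤ 2^{-n-|j|}`.  This is needed for at
  most `2^n` boxes; on the empty ones `|μ_{j,m}| ≤ 4^{-|j|}`.

Hence the term of shape `j` is at most a constant times `4^{-n} ρ^{||j| + 1 - n|}` with `ρ < 1`, and
the `n` shapes on the diagonal `|j| + 1 = n` produce the factor `n`.  Shapes with an entry `-1`
behave similarly, except that `μ_{(-1,-1)}` contains the summand `(2 a_n - n) / (8 * 2^n)`, which is
where the balance of the shift enters.
-/

section Points

variable {n : ℕ}

lemma bval_le_one (b : Bool) : bval b ≤ 1 := by cases b <;> simp [bval]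

lemma hammersleyShifted_cons (σ : Fin (n + 1) → Bool) (b : Bool) (t : Fin n → Bool) :
    hammersleyShifted (n + 1) σ (Fin.cons b t) =
      ((hammersleyShifted n (Fin.tail σ) t).1 + bval b / 2 ^ (n + 1),
        ((hammersleyShifted n (Fin.tail σ) t).2 + bval (b != σ 0)) / 2) := by
  simp [hammersleyShifted, Fin.sum_univ_succ, Fin.tail, add_div, Finset.sum_div, div_div, pow_succ,
    add_comm]

lemma sum_hammersleyShifted_succ {M : Type*} [AddCommMonoid M] (σ : Fin (n + 1) → Bool)
    (F : ℝ × ℝ → M) :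
    ∑ t, F (hammersleyShifted (n + 1) σ t) =
      ∑ t, ∑ b, F ((hammersleyShifted n (Fin.tail σ) t).1 + bval b / 2 ^ (n + 1),
        ((hammersleyShifted n (Fin.tail σ) t).2 + bval (b != σ 0)) / 2) := by
  rw [← (Fin.consEquiv fun _ : Fin (n + 1) ↦ Bool).sum_comp, Fintype.sum_prod_type_right]
  simp only [← hammersleyShifted_cons]
  rfl

/-- The permutation of the digit vectors which shifts by `σ` and then reverses the order of the
digits.  It exchanges the two coordinates of a point, turning `R_{n,σ}` into the Hammersley point
set of the reversed shift. -/
def reverseShift (σ : Fin n → Bool) : (Fin n → Bool) ≃ (Fin n → Bool) where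
  toFun t i := t i.rev != σ i.rev
  invFun t i := t i.rev != σ i
  left_inv t := by ext i; simp
  right_inv t := by ext i; simp

lemma hammersleyShifted_reverseShift (σ t : Fin n → Bool) :
    hammersleyShifted n (σ ∘ Fin.rev) (reverseShift σ t) = (hammersleyShifted n σ t).swap := by
  have hrev (i : Fin n) : n - (n - (i.val + 1)) = i.val + 1 := by omega
  have hrev' (i : Fin n) : n - (i.val + 1) + 1 = n - i.val := by omega
  ext <;>
    simp only [hammersleyShifted, reverseShift, Equiv.coe_fn_mk, Prod.swap, Function.comp_apply] <;>
    rw [← Equiv.sum_comp Fin.revPerm] <;>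
    simp [hrev, hrev']

lemma sum_hammersleyShifted_swap {M : Type*} [AddCommMonoid M] (σ : Fin n → Bool)
    (F : ℝ × ℝ → M) :
    ∑ t, F (hammersleyShifted n σ t).swap = ∑ t, F (hammersleyShifted n (σ ∘ Fin.rev) t) := by
  rw [← (reverseShift σ).sum_comp fun t ↦ F (hammersleyShifted n (σ ∘ Fin.rev) t)]
  simp only [hammersleyShifted_reverseShift]

lemma sum_hammersleyShifted_succ_last {M : Type*} [AddCommMonoid M] (σ : Fin (n + 1) → Bool)
    (F : ℝ × ℝ → M) :
    ∑ t, F (hammersleyShifted (n + 1) σ t) =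
      ∑ t, ∑ b, F (((hammersleyShifted n (Fin.init σ) t).1 + bval (b != σ (Fin.last n))) / 2,
        (hammersleyShifted n (Fin.init σ) t).2 + bval b / 2 ^ (n + 1)) := by
  have htail : Fin.tail (σ ∘ Fin.rev) = Fin.init σ ∘ Fin.rev := by
    ext i; simp [Fin.tail, Fin.init, Fin.rev_succ]
  have hzero : (σ ∘ Fin.rev) 0 = σ (Fin.last n) := by simp
  have hswap := sum_hammersleyShifted_swap σ fun P ↦ F P.swap
  simp only [Prod.swap_swap] at hswap
  rw [hswap, sum_hammersleyShifted_succ _ fun P ↦ F P.swap, htail, hzero]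
  exact (sum_hammersleyShifted_swap (Fin.init σ) fun P ↦
    ∑ b, F (((P.2 + bval (b != σ (Fin.last n))) / 2, P.1 + bval b / 2 ^ (n + 1)))).symm

lemma hammersleyShifted_snd_mem (σ t : Fin n → Bool) :
    (hammersleyShifted n σ t).2 ∈ Set.Icc (0 : ℝ) (1 - 1 / 2 ^ n) := by
  induction n with
  | zero => simp [hammersleyShifted]
  | succ n ih =>
    obtain ⟨hlow, hhigh⟩ := ih (Fin.tail σ) (Fin.tail t)
    have hb := bval_nonneg (t 0 != σ 0)
    have hb' := bval_le_one (t 0 != σ 0)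
    have hpow : (1 : ℝ) / 2 ^ (n + 1) = 1 / 2 ^ n / 2 := by ring
    rw [← Fin.cons_self_tail t, hammersleyShifted_cons, hpow]
    constructor <;> dsimp only <;> linarith

lemma hammersleyShifted_fst_mem (σ t : Fin n → Bool) :
    (hammersleyShifted n σ t).1 ∈ Set.Icc (0 : ℝ) (1 - 1 / 2 ^ n) := by
  rw [← Prod.snd_swap, ← hammersleyShifted_reverseShift]
  exact hammersleyShifted_snd_mem _ _

lemma sum_hammersleyShifted_snd (σ : Fin n → Bool) :
    ∑ t, (hammersleyShifted n σ t).2 = (2 ^ n - 1) / 2 := by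
  induction n with
  | zero => simp [hammersleyShifted]
  | succ n ih =>
    rw [sum_hammersleyShifted_succ σ Prod.snd]
    have hpair (y : ℝ) : ∑ b, (y + bval (b != σ 0)) / 2 = y + 1 / 2 := by
      cases σ 0 <;> simp [bval] <;> ring
    simp only [hpair, Finset.sum_add_distrib, ih]
    simp
    ring

lemma sum_hammersleyShifted_fst (σ : Fin n → Bool) :
    ∑ t, (hammersleyShifted n σ t).1 = (2 ^ n - 1) / 2 :=
  (sum_hammersleyShifted_swap σ Prod.snd).trans (sum_hammersleyShifted_snd _)

lemma zeroCount_eq_tail (σ : Fin (n + 1) → Bool) :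
    zeroCount σ = (if σ 0 = false then 1 else 0) + zeroCount (Fin.tail σ) := by
  simp only [zeroCount, Finset.card_filter, Fin.sum_univ_succ]
  rfl

lemma sum_hammersleyShifted_fst_mul_snd (σ : Fin n → Bool) :
    ∑ t, (hammersleyShifted n σ t).1 * (hammersleyShifted n σ t).2 =
      2 ^ n * (1 / 2 - 1 / (2 * 2 ^ n)) ^ 2 + (2 * zeroCount σ - n) / 8 := by
  induction n with
  | zero => simp [hammersleyShifted, zeroCount]
  | succ n ih =>
    rw [sum_hammersleyShifted_succ σ fun P ↦ P.1 * P.2, zeroCount_eq_tail]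
    have hpair (x y q : ℝ) : ∑ b, (x + bval b * q) * ((y + bval (b != σ 0)) / 2) =
        x * y + x / 2 + y * q / 2 + (if σ 0 = false then 1 else 0) * q / 2 := by
      cases σ 0 <;> simp [bval] <;> ring
    simp only [div_eq_mul_inv _ ((2 : ℝ) ^ (n + 1)), hpair, Finset.sum_add_distrib,
      ← Finset.sum_div, ← Finset.sum_mul, ih, sum_hammersleyShifted_fst, sum_hammersleyShifted_snd,
      Finset.sum_const, Finset.card_univ, Fintype.card_fun, Fintype.card_bool, Fintype.card_fin,
      nsmul_eq_mul]
    push_cast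
    field_simp
    ring

end Points

section Tents

/-- The tent function: the triangle over `[0,1]` with peak `1/2`, extended by `0`. -/
noncomputable def tent (u : ℝ) : ℝ := max 0 (min u (1 - u))

/-- The tent of slope `±1` over the dyadic interval `I_{j,m}`.  Up to sign it is the antiderivative
of the Haar function `h_{j,m}`. -/
noncomputable def dyadicTent (j m : ℕ) (z : ℝ) : ℝ := tent (z * 2 ^ j - m) / 2 ^ j

lemma tent_nonneg (u : ℝ) : 0 ≤ tent u := le_max_left _ _

lemma tent_le (u : ℝ) : tent u ≤ 1 / 2 := by
  refine max_le (by norm_num) ?_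
  rcases le_total u (1 / 2) with hu | hu
  · exact (min_le_left _ _).trans hu
  · exact (min_le_right _ _).trans (by linarith)

lemma tent_of_le_half {u : ℝ} (h0 : 0 ≤ u) (h : u ≤ 1 / 2) : tent u = u := by
  rw [tent, min_eq_left (by linarith), max_eq_right h0]

lemma tent_of_half_le {u : ℝ} (h : 1 / 2 ≤ u) (h1 : u ≤ 1) : tent u = 1 - u := by
  rw [tent, min_eq_right (by linarith), max_eq_right (by linarith)]

lemma tent_of_notMem_Ioo {u : ℝ} (h : u ∉ Set.Ioo (0 : ℝ) 1) : tent u = 0 := by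
  rw [tent, max_eq_left]
  by_contra! hpos
  exact h ⟨hpos.trans_le (min_le_left _ _), by linarith [min_le_right u (1 - u)]⟩

lemma dyadicTent_nonneg (j m : ℕ) (z : ℝ) : 0 ≤ dyadicTent j m z :=
  div_nonneg (tent_nonneg _) (by positivity)

lemma dyadicTent_le (j m : ℕ) (z : ℝ) : dyadicTent j m z ≤ 1 / 2 / 2 ^ j := by
  unfold dyadicTent
  gcongr
  exact tent_le _

lemma dyadicTent_zero_zero (z : ℝ) : dyadicTent 0 0 z = tent z := by simp [dyadicTent]

lemma dyadicTent_apply_zero (j m : ℕ) : dyadicTent j m 0 = 0 := by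
  rw [dyadicTent, tent_of_notMem_Ioo, zero_div]
  rintro ⟨h, -⟩
  linarith [(Nat.cast_nonneg m : (0 : ℝ) ≤ m)]

/-- `b` is the leading binary digit of the position `m`. -/
lemma exists_dyadicTent_succ {j m : ℕ} (hm : m < 2 ^ (j + 1)) :
    ∃ b : Bool, ∃ m' < 2 ^ j, ∀ u ∈ Set.Icc (0 : ℝ) 1, ∀ c : Bool,
      dyadicTent (j + 1) m ((u + bval c) / 2) = if c = b then dyadicTent j m' u / 2 else 0 := by
  have hscale (u : ℝ) (c : Bool) :
      (u + bval c) / 2 * 2 ^ (j + 1) - m = u * 2 ^ j - (m - bval c * 2 ^ j) := by ring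
  have hpow : (0 : ℝ) < 2 ^ j := by positivity
  rcases lt_or_ge m (2 ^ j) with h | h
  · have hm' : (m : ℝ) + 1 ≤ 2 ^ j := by exact_mod_cast h
    refine ⟨false, m, h, fun u hu c ↦ ?_⟩
    cases c <;> rw [dyadicTent, hscale]
    · simp [bval, dyadicTent, pow_succ, div_div]
    · rw [tent_of_notMem_Ioo, zero_div, if_neg (by decide)]
      rintro ⟨-, hlt⟩
      simp only [bval, if_true] at hlt
      nlinarith [hu.1]
  · have hm' : (2 : ℝ) ^ j ≤ m := by exact_mod_cast h
    refine ⟨true, m - 2 ^ j, by omega, fun u hu c ↦ ?_⟩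
    cases c <;> rw [dyadicTent, hscale]
    · rw [tent_of_notMem_Ioo, zero_div, if_neg (by decide)]
      rintro ⟨hlt, -⟩
      simp [bval] at hlt
      nlinarith [hu.2]
    · simp [bval, dyadicTent, pow_succ, div_div, Nat.cast_sub h]

end Tents

section Renormalisation

variable {n j j₁ j₂ m m₁ m₂ : ℕ}

lemma exists_sum_mul_dyadicTent_succ (hm : m < 2 ^ (j + 1)) (σ : Fin (n + 1) → Bool) {ε : ℝ}
    (hε : ε ∈ Set.Icc (0 : ℝ) (1 / 2 ^ (n + 1))) :
    ∃ m' < 2 ^ j, ∃ δ ∈ Set.Icc (0 : ℝ) (1 / 2 ^ (n + 1)), ∀ f : ℝ → ℝ,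
      ∑ t, f (hammersleyShifted (n + 1) σ t).1 *
          dyadicTent (j + 1) m ((hammersleyShifted (n + 1) σ t).2 + ε) =
        (∑ t, f ((hammersleyShifted n (Fin.tail σ) t).1 + δ) *
          dyadicTent j m' ((hammersleyShifted n (Fin.tail σ) t).2 + 2 * ε)) / 2 := by
  obtain ⟨b, m', hm', htent⟩ := exists_dyadicTent_succ hm
  refine ⟨m', hm', bval (b != σ 0) / 2 ^ (n + 1), ⟨?_, ?_⟩, fun f ↦ ?_⟩
  · exact div_nonneg (bval_nonneg _) (by positivity)
  · gcongr
    exact bval_le_one _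
  rw [sum_hammersleyShifted_succ σ fun P ↦ f P.1 * dyadicTent (j + 1) m (P.2 + ε), Finset.sum_div]
  refine Finset.sum_congr rfl fun t _ ↦ ?_
  obtain ⟨hlow, hhigh⟩ := hammersleyShifted_snd_mem (Fin.tail σ) t
  have hmem : (hammersleyShifted n (Fin.tail σ) t).2 + 2 * ε ∈ Set.Icc (0 : ℝ) 1 := by
    have hpow : (1 : ℝ) / 2 ^ (n + 1) = 1 / 2 ^ n / 2 := by ring
    rw [hpow] at hε
    constructor <;> linarith [hε.1, hε.2]
  have hdigit (c : Bool) := htent _ hmem (c != σ 0)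
  have hshift (y c : ℝ) : (y + c) / 2 + ε = (y + 2 * ε + c) / 2 := by ring
  simp only [hshift, hdigit]
  cases b <;> cases σ 0 <;> simp [mul_div_assoc]

lemma exists_sum_mul_dyadicTent_add (d : ℕ) (hm : m < 2 ^ (j + d)) (σ : Fin (n + d) → Bool) {ε : ℝ}
    (hε : ε ∈ Set.Icc (0 : ℝ) (1 / 2 ^ (n + d))) :
    ∃ σ' : Fin n → Bool, ∃ m' < 2 ^ j, ∃ δ ∈ Set.Icc (0 : ℝ) (1 / 2 ^ n - 1 / 2 ^ (n + d)),
      ∀ f : ℝ → ℝ, ∑ t, f (hammersleyShifted (n + d) σ t).1 *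
          dyadicTent (j + d) m ((hammersleyShifted (n + d) σ t).2 + ε) =
        (∑ t, f ((hammersleyShifted n σ' t).1 + δ) *
          dyadicTent j m' ((hammersleyShifted n σ' t).2 + 2 ^ d * ε)) / 2 ^ d := by
  induction d generalizing m ε with
  | zero => exact ⟨σ, m, hm, 0, by simp, by simp⟩
  | succ d ih =>
    obtain ⟨m₀, hm₀, δ₀, hδ₀, hstep⟩ :=
      exists_sum_mul_dyadicTent_succ (n := n + d) (j := j + d) hm σ hε
    have hpow : (1 : ℝ) / 2 ^ (n + (d + 1)) = 1 / 2 ^ (n + d) / 2 := by ring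
    have hpow' : (1 : ℝ) / 2 ^ (n + d + 1) = 1 / 2 ^ (n + d) / 2 := by ring
    rw [hpow] at hε
    rw [hpow'] at hδ₀
    obtain ⟨σ', m', hm', δ, hδ, hrest⟩ := ih hm₀ (Fin.tail σ) (ε := 2 * ε)
      ⟨by linarith [hε.1], by linarith [hε.2]⟩
    refine ⟨σ', m', hm', δ + δ₀, ?_, fun f ↦ ?_⟩
    · rw [hpow]
      constructor <;> linarith [hδ.1, hδ.2, hδ₀.1, hδ₀.2]
    · refine (hstep f).trans ?_
      rw [hrest fun x ↦ f (x + δ₀), div_div, ← pow_succ]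
      simp only [add_assoc, pow_succ, mul_assoc]

lemma sum_fst_mul_snd_swap (σ : Fin n → Bool) (f g : ℝ → ℝ) :
    ∑ t, f (hammersleyShifted n σ t).1 * g (hammersleyShifted n σ t).2 =
      ∑ t, g (hammersleyShifted n (σ ∘ Fin.rev) t).1 *
        f (hammersleyShifted n (σ ∘ Fin.rev) t).2 := by
  rw [← sum_hammersleyShifted_swap σ fun P ↦ g P.1 * f P.2]
  simp only [Prod.fst_swap, Prod.snd_swap, mul_comm]

lemma exists_sum_dyadicTent_mul_dyadicTent_add (d₁ d₂ : ℕ) (hm₁ : m₁ < 2 ^ (j₁ + d₁))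
    (hm₂ : m₂ < 2 ^ (j₂ + d₂)) (σ : Fin (n + d₁ + d₂) → Bool) :
    ∃ σ' : Fin n → Bool, ∃ m₁' < 2 ^ j₁, ∃ m₂' < 2 ^ j₂, ∃ δ₁ ∈ Set.Icc (0 : ℝ) (1 / 2 ^ n),
      ∃ δ₂ ∈ Set.Icc (0 : ℝ) (1 / 2 ^ n),
        ∑ t, dyadicTent (j₁ + d₁) m₁ (hammersleyShifted _ σ t).1 *
            dyadicTent (j₂ + d₂) m₂ (hammersleyShifted _ σ t).2 =
          (∑ t, dyadicTent j₁ m₁' ((hammersleyShifted n σ' t).1 + δ₁) *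
            dyadicTent j₂ m₂' ((hammersleyShifted n σ' t).2 + δ₂)) / 2 ^ (d₁ + d₂) := by
  obtain ⟨σ', m₂', hm₂', δ, hδ, hsnd⟩ :=
    exists_sum_mul_dyadicTent_add d₂ hm₂ σ (ε := 0) ⟨le_rfl, by positivity⟩
  have hδ' : δ ∈ Set.Icc (0 : ℝ) (1 / 2 ^ (n + d₁)) :=
    ⟨hδ.1, hδ.2.trans (sub_le_self _ (by positivity))⟩
  obtain ⟨σ'', m₁', hm₁', δ₂, hδ₂, hfst⟩ :=
    exists_sum_mul_dyadicTent_add d₁ hm₁ (σ' ∘ Fin.rev) hδ'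
  refine ⟨σ'' ∘ Fin.rev, m₁', hm₁', m₂', hm₂', 2 ^ d₁ * δ, ⟨?_, ?_⟩, δ₂,
    ⟨hδ₂.1, hδ₂.2.trans (sub_le_self _ (by positivity))⟩, ?_⟩
  · exact mul_nonneg (by positivity) hδ.1
  · calc 2 ^ d₁ * δ ≤ 2 ^ d₁ * (1 / 2 ^ (n + d₁)) := by gcongr; exact hδ'.2
      _ = 1 / 2 ^ n := by rw [pow_add]; field_simp
  · simp only [add_zero, mul_zero] at hsnd
    rw [hsnd, sum_fst_mul_snd_swap σ' (fun x ↦ dyadicTent (j₁ + d₁) m₁ (x + δ)), hfst,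
      sum_fst_mul_snd_swap σ'' (fun x ↦ dyadicTent j₂ m₂' (x + δ₂))
        fun y ↦ dyadicTent j₁ m₁' (y + 2 ^ d₁ * δ), div_div, pow_add]

end Renormalisation

section TentSums

lemma four_pow_eq (k : ℕ) : (4 : ℝ) ^ k = 2 ^ k * 2 ^ k := by
  rw [← mul_pow]
  norm_num

variable {n k j₁ j₂ m m₁ m₂ : ℕ}

/-- Whatever the two digits `s`, `s'` of the shift are, the terms that depend on `x` and `y`
cancel. -/
lemma abs_sum_digits_tent_mul_tent_sub_le (s s' : Bool) {x y q : ℝ} (hq : 0 ≤ q)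
    (hx : x ∈ Set.Icc 0 (1 / 2 - q)) (hy : y ∈ Set.Icc 0 (1 / 2 - q)) :
    |∑ a, ∑ b, tent (x + bval a * q + bval (b != s') / 2) *
      tent (y + bval b * q + bval (a != s) / 2) - 1 / 4| ≤ q ^ 2 := by
  obtain ⟨hx0, hx1⟩ := hx
  obtain ⟨hy0, hy1⟩ := hy
  have htent {z : ℝ} (h0 : 0 ≤ z) (h1 : z ≤ 1 / 2 - q) (c d : Bool) :
      tent (z + bval c * q + bval d / 2) =
        if d then 1 / 2 - (z + bval c * q) else z + bval c * q := by
    have hz0 : 0 ≤ z + bval c * q := add_nonneg h0 (mul_nonneg (bval_nonneg c) hq)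
    have hz1 : z + bval c * q ≤ 1 / 2 := by nlinarith [bval_le_one c]
    cases d
    · simpa [bval] using tent_of_le_half hz0 hz1
    · rw [tent_of_half_le (by simp [bval] at hz0 ⊢; linarith) (by simp [bval] at hz1 ⊢; linarith)]
      simp [bval]
      ring
  have hsum : ∑ a, ∑ b, tent (x + bval a * q + bval (b != s') / 2) *
      tent (y + bval b * q + bval (a != s) / 2) - 1 / 4 =
        if s = s' then q ^ 2 else -q ^ 2 := by
    simp only [htent hx0 hx1, htent hy0 hy1]
    cases s <;> cases s' <;> simp [bval] <;> ring
  rw [hsum]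
  split_ifs <;> simp

lemma abs_sum_tent_mul_tent_sub_le (σ : Fin (n + 2) → Bool) {δ₁ δ₂ : ℝ}
    (hδ₁ : δ₁ ∈ Set.Icc (0 : ℝ) (1 / 2 ^ (n + 2))) (hδ₂ : δ₂ ∈ Set.Icc (0 : ℝ) (1 / 2 ^ (n + 2))) :
    |∑ t, tent ((hammersleyShifted _ σ t).1 + δ₁) * tent ((hammersleyShifted _ σ t).2 + δ₂) -
      2 ^ (n + 2) / 16| ≤ 1 / (4 * 2 ^ (n + 2)) := by
  set H := hammersleyShifted n (Fin.init (Fin.tail σ))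
  set q : ℝ := 1 / 2 ^ (n + 2)
  have hdigits : ∑ t, tent ((hammersleyShifted _ σ t).1 + δ₁) *
      tent ((hammersleyShifted _ σ t).2 + δ₂) = ∑ t, ∑ b, ∑ a,
        tent ((H t).1 / 2 + δ₁ + bval a * q + bval (b != Fin.tail σ (Fin.last n)) / 2) *
          tent ((H t).2 / 2 + δ₂ + bval b * q + bval (a != σ 0) / 2) := by
    rw [sum_hammersleyShifted_succ σ fun P ↦ tent (P.1 + δ₁) * tent (P.2 + δ₂),
      sum_hammersleyShifted_succ_last (Fin.tail σ) fun P ↦ ∑ a,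
        tent (P.1 + bval a / 2 ^ (n + 2) + δ₁) * tent ((P.2 + bval (a != σ 0)) / 2 + δ₂)]
    refine Fintype.sum_congr _ _ fun t ↦ Fintype.sum_congr _ _ fun b ↦
      Fintype.sum_congr _ _ fun a ↦ ?_
    congr 2 <;> simp only [q] <;> ring
  have hcoord {z δ : ℝ} (hz : z ∈ Set.Icc (0 : ℝ) (1 - 1 / 2 ^ n)) (hδ : δ ∈ Set.Icc 0 q) :
      z / 2 + δ ∈ Set.Icc 0 (1 / 2 - q) := by
    have hpow : (1 : ℝ) / 2 ^ n = 4 * q := by simp only [q]; ring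
    rw [hpow] at hz
    constructor <;> linarith [hz.1, hz.2, hδ.1, hδ.2]
  have hconst : (2 : ℝ) ^ (n + 2) / 16 = ∑ _t : Fin n → Bool, 1 / 4 := by
    simp
    ring
  rw [hdigits, hconst, ← Finset.sum_sub_distrib]
  calc _ ≤ ∑ t : Fin n → Bool, q ^ 2 := by
        refine (Finset.abs_sum_le_sum_abs _ _).trans (Finset.sum_le_sum fun t _ ↦ ?_)
        rw [Finset.sum_comm]
        exact abs_sum_digits_tent_mul_tent_sub_le _ _ (by positivity)
          (hcoord (hammersleyShifted_fst_mem _ t) hδ₁) (hcoord (hammersleyShifted_snd_mem _ t) hδ₂)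
    _ = 1 / (4 * 2 ^ (n + 2)) := by
        simp [q]
        field_simp
        ring

lemma abs_sum_dyadicTent_mul_dyadicTent_sub_le (hn : j₁ + j₂ + 2 ≤ n) (hm₁ : m₁ < 2 ^ j₁)
    (hm₂ : m₂ < 2 ^ j₂) (σ : Fin n → Bool) :
    |∑ t, dyadicTent j₁ m₁ (hammersleyShifted n σ t).1 *
        dyadicTent j₂ m₂ (hammersleyShifted n σ t).2 - 2 ^ n / (16 * 4 ^ (j₁ + j₂))| ≤
      1 / (4 * 2 ^ n) := by
  obtain ⟨r, rfl⟩ : ∃ r, n = r + 2 + j₁ + j₂ := ⟨n - (j₁ + j₂ + 2), by omega⟩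
  obtain ⟨σ', m₁', hm₁', m₂', hm₂', δ₁, hδ₁, δ₂, hδ₂, hsum⟩ :=
    exists_sum_dyadicTent_mul_dyadicTent_add (j₁ := 0) (j₂ := 0) j₁ j₂ (by simpa using hm₁)
      (by simpa using hm₂) σ
  obtain rfl : m₁' = 0 := by simpa using hm₁'
  obtain rfl : m₂' = 0 := by simpa using hm₂'
  simp only [zero_add, dyadicTent_zero_zero] at hsum
  have hconst : (2 : ℝ) ^ (r + 2 + j₁ + j₂) / (16 * 4 ^ (j₁ + j₂)) =
      2 ^ (r + 2) / 16 / 2 ^ (j₁ + j₂) := by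
    rw [four_pow_eq, add_assoc _ j₁, pow_add 2 (r + 2)]
    field_simp
  rw [hsum, hconst, ← sub_div, abs_div, abs_of_pos (pow_pos two_pos (j₁ + j₂) : (0 : ℝ) < _),
    div_le_iff₀ (by positivity)]
  refine (abs_sum_tent_mul_tent_sub_le σ' hδ₁ hδ₂).trans_eq ?_
  rw [add_assoc _ j₁, pow_add 2 (r + 2)]
  field_simp

lemma sum_dyadicTent_mul_dyadicTent_nonneg (σ : Fin n → Bool) :
    0 ≤ ∑ t, dyadicTent j₁ m₁ (hammersleyShifted n σ t).1 *
        dyadicTent j₂ m₂ (hammersleyShifted n σ t).2 :=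
  Finset.sum_nonneg fun _ _ ↦ mul_nonneg (dyadicTent_nonneg _ _ _) (dyadicTent_nonneg _ _ _)

lemma sum_dyadicTent_mul_dyadicTent_le (hn : n ≤ j₁ + j₂ + 1) (hm₁ : m₁ < 2 ^ j₁)
    (hm₂ : m₂ < 2 ^ j₂) (σ : Fin n → Bool) :
    ∑ t, dyadicTent j₁ m₁ (hammersleyShifted n σ t).1 *
        dyadicTent j₂ m₂ (hammersleyShifted n σ t).2 ≤ 1 / (2 * 2 ^ (j₁ + j₂)) := by
  obtain ⟨r, i₁, i₂, d₁, d₂, hr, rfl, rfl, rfl⟩ :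
      ∃ r i₁ i₂ d₁ d₂, r ≤ 1 ∧ j₁ = i₁ + d₁ ∧ j₂ = i₂ + d₂ ∧ n = r + d₁ + d₂ :=
    ⟨n - min j₁ n - min j₂ (n - min j₁ n), j₁ - min j₁ n, j₂ - min j₂ (n - min j₁ n), min j₁ n,
      min j₂ (n - min j₁ n), by omega, by omega, by omega, by omega⟩
  obtain ⟨σ', m₁', -, m₂', -, δ₁, -, δ₂, -, hsum⟩ :=
    exists_sum_dyadicTent_mul_dyadicTent_add d₁ d₂ hm₁ hm₂ σ
  have hterm (t : Fin r → Bool) : dyadicTent i₁ m₁' ((hammersleyShifted r σ' t).1 + δ₁) *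
      dyadicTent i₂ m₂' ((hammersleyShifted r σ' t).2 + δ₂) ≤ 1 / 2 / 2 ^ i₁ * (1 / 2 / 2 ^ i₂) :=
    mul_le_mul (dyadicTent_le _ _ _) (dyadicTent_le _ _ _) (dyadicTent_nonneg _ _ _)
      (by positivity)
  have hcard : (2 : ℝ) ^ r ≤ 2 := by simpa using pow_le_pow_right₀ (one_le_two (α := ℝ)) hr
  calc _ = _ := hsum
    _ ≤ (∑ _t : Fin r → Bool, 1 / 2 / 2 ^ i₁ * (1 / 2 / 2 ^ i₂)) / 2 ^ (d₁ + d₂) := by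
        refine div_le_div_of_nonneg_right (Finset.sum_le_sum fun t _ ↦ hterm t) (by positivity)
    _ = 2 ^ r / 4 / 2 ^ (i₁ + d₁ + (i₂ + d₂)) := by
        simp [pow_add]
        field_simp
        norm_num
    _ ≤ 2 / 4 / 2 ^ (i₁ + d₁ + (i₂ + d₂)) := by gcongr
    _ = 1 / (2 * 2 ^ (i₁ + d₁ + (i₂ + d₂))) := by
        field_simp
        norm_num

lemma sum_mul_dyadicTent_eq_zero (hk : n ≤ k) (hm : m < 2 ^ k) (σ : Fin n → Bool) (f : ℝ → ℝ) :
    ∑ t, f (hammersleyShifted n σ t).1 * dyadicTent k m (hammersleyShifted n σ t).2 = 0 := by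
  obtain ⟨r, d, i, rfl, rfl, hr⟩ : ∃ r d i, n = r + d ∧ k = i + d ∧ r = 0 :=
    ⟨0, n, k - n, by omega, by omega, rfl⟩
  obtain ⟨σ', m', -, δ, -, hsum⟩ :=
    exists_sum_mul_dyadicTent_add d hm σ (ε := 0) ⟨le_rfl, by positivity⟩
  simp only [add_zero, mul_zero] at hsum
  subst hr
  rw [hsum]
  simp [hammersleyShifted, dyadicTent_apply_zero]

lemma abs_sum_one_sub_mul_tent_sub_le (σ : Fin n → Bool) {δ : ℝ}
    (hδ : δ ∈ Set.Icc (0 : ℝ) (1 / 2 ^ n)) :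
    |∑ t, (1 - ((hammersleyShifted n σ t).1 + δ)) * tent (hammersleyShifted n σ t).2 -
      2 ^ n / 8| ≤ 1 / 4 := by
  cases n with
  | zero =>
    have htent : tent 0 = 0 := by simpa [dyadicTent] using dyadicTent_apply_zero 0 0
    norm_num [hammersleyShifted, htent, abs_of_pos]
  | succ n =>
    set H := hammersleyShifted n (Fin.tail σ)
    set q : ℝ := 1 / 2 ^ (n + 1)
    have hNq : (2 : ℝ) ^ n * q = 1 / 2 := by simp only [q]; field_simp; ring
    have hpair (t : Fin n → Bool) : ∑ b, (1 - ((H t).1 + bval b / 2 ^ (n + 1) + δ)) *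
        tent (((H t).2 + bval (b != σ 0)) / 2) =
          (1 - δ - (H t).1) / 2 - q * (if σ 0 then (H t).2 / 2 else (1 - (H t).2) / 2) := by
      obtain ⟨hy0, hy1⟩ := hammersleyShifted_snd_mem (Fin.tail σ) t
      have hy1 : (H t).2 ≤ 1 := hy1.trans (sub_le_self _ (by positivity))
      have hlow : tent ((H t).2 / 2) = (H t).2 / 2 := tent_of_le_half (by linarith) (by linarith)
      have hhigh : tent (((H t).2 + 1) / 2) = 1 - ((H t).2 + 1) / 2 :=
        tent_of_half_le (by linarith) (by linarith)
      cases σ 0 <;> simp [bval, q, hlow, hhigh] <;> ring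
    have hrest : ∑ t, (if σ 0 then (H t).2 / 2 else (1 - (H t).2) / 2) ∈
        Set.Icc 0 ((2 : ℝ) ^ n / 2) := by
      have hsum := sum_hammersleyShifted_snd (Fin.tail σ)
      have hone := one_le_pow₀ (n := n) (one_le_two (α := ℝ))
      cases σ 0 <;> simp [← Finset.sum_div, H, hsum] <;> constructor <;> linarith
    have hmain : ∑ t, (1 - δ - (H t).1) / 2 = 2 ^ (n + 1) / 8 + 1 / 4 - 2 ^ n * δ / 2 := by
      have hsum := sum_hammersleyShifted_fst (Fin.tail σ)
      simp [← Finset.sum_div, H, hsum]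
      ring
    rw [sum_hammersleyShifted_succ σ fun P ↦ (1 - (P.1 + δ)) * tent P.2,
      Fintype.sum_congr _ _ hpair, Finset.sum_sub_distrib, ← Finset.mul_sum, hmain, abs_le]
    have hδ' : 2 ^ n * δ ≤ 1 / 2 := hNq ▸ mul_le_mul_of_nonneg_left hδ.2 (by positivity)
    have hδ0 : 0 ≤ 2 ^ n * δ := mul_nonneg (by positivity) hδ.1
    have hq : 0 ≤ q := by positivity
    constructor <;> nlinarith [mul_nonneg hq hrest.1, mul_le_mul_of_nonneg_left hrest.2 hq]

lemma abs_sum_one_sub_mul_dyadicTent_sub_le (hm : m < 2 ^ k) (σ : Fin n → Bool) :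
    |∑ t, (1 - (hammersleyShifted n σ t).1) * dyadicTent k m (hammersleyShifted n σ t).2 -
      2 ^ n / (8 * 4 ^ k)| ≤ 2 ^ n / (4 * 2 ^ k * 2 ^ max n k) := by
  rcases le_total k n with hk | hk
  · obtain ⟨r, rfl⟩ : ∃ r, n = r + k := ⟨n - k, by omega⟩
    obtain ⟨σ', m', hm', δ, hδ, hsum⟩ := exists_sum_mul_dyadicTent_add (j := 0) k
      (by simpa using hm) σ (ε := 0) ⟨le_rfl, by positivity⟩
    obtain rfl : m' = 0 := by simpa using hm'
    simp only [zero_add, add_zero, mul_zero, dyadicTent_zero_zero] at hsum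
    have hconst : (2 : ℝ) ^ (r + k) / (8 * 4 ^ k) = 2 ^ r / 8 / 2 ^ k := by
      rw [four_pow_eq, pow_add]
      field_simp
    rw [hsum fun x ↦ 1 - x, hconst, ← sub_div, abs_div,
      abs_of_pos (pow_pos two_pos k : (0 : ℝ) < _), div_le_iff₀ (by positivity)]
    refine (abs_sum_one_sub_mul_tent_sub_le σ'
      ⟨hδ.1, hδ.2.trans (sub_le_self _ (by positivity))⟩).trans_eq ?_
    rw [max_eq_left hk]
    field_simp
  · rw [sum_mul_dyadicTent_eq_zero hk hm σ (fun x ↦ 1 - x), zero_sub, abs_neg,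
      abs_of_pos (by positivity), max_eq_right hk, four_pow_eq]
    gcongr 2 ^ n / ?_
    rw [← mul_assoc]
    gcongr
    norm_num

end TentSums

section HaarIntegrals

variable {j m : ℕ}

/-- The integral of the Haar function `h_{j,m}` over `[0,1] ∩ (z, ∞)`: the one-dimensional factor
of the contribution of a point with coordinate `z` to a Haar coefficient of the counting part. -/
noncomputable def haarTail (j : ℤ) (m : ℕ) (z : ℝ) : ℝ :=
  ∫ t in Set.Icc (0 : ℝ) 1, (if z < t then 1 else 0) * haar1 j m t

/-- The first moment of the Haar function `h_{j,m}`: the one-dimensional factor of the Haar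
coefficient of the volume part. -/
noncomputable def haarMoment (j : ℤ) (m : ℕ) : ℝ := ∫ t in Set.Icc (0 : ℝ) 1, t * haar1 j m t

lemma haar1_neg_one (m : ℕ) : haar1 (-1) m = (Set.Ico (0 : ℝ) 1).indicator 1 := by
  ext t
  simp [haar1, Set.indicator]

lemma haar1_natCast (j m : ℕ) :
    haar1 j m = (Set.Ico ((m : ℝ) / 2 ^ j) ((m + 1 / 2) / 2 ^ j)).indicator 1 -
      (Set.Ico (((m : ℝ) + 1 / 2) / 2 ^ j) ((m + 1) / 2 ^ j)).indicator 1 := by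
  have hscale (x : ℝ) : 2 * x / 2 ^ (j + 1) = x / 2 ^ j := by rw [pow_succ]; field_simp
  have hleft := hscale m
  have hmid : (2 * m + 1 : ℝ) / 2 ^ (j + 1) = (m + 1 / 2) / 2 ^ j := by rw [← hscale]; ring
  have hright : (2 * m + 2 : ℝ) / 2 ^ (j + 1) = (m + 1) / 2 ^ j := by rw [← hscale]; ring
  have hj : (j : ℤ) ≠ -1 := by omega
  ext t
  simp only [haar1, hj, if_false, Int.toNat_natCast, hleft, hmid, hright, Pi.sub_apply,
    Set.indicator, Set.mem_Ico, Pi.one_apply]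
  split_ifs with hl hr
  · exact absurd hr.1 hl.2.not_ge
  all_goals simp

lemma measurable_haar1 (j : ℤ) (m : ℕ) : Measurable (haar1 j m) := by
  unfold haar1
  exact .ite (.const _) (.ite measurableSet_Ico measurable_const measurable_const)
    (.ite measurableSet_Ico measurable_const (.ite measurableSet_Ico measurable_const
      measurable_const))

lemma norm_haar1_le_one (j : ℤ) (m : ℕ) (x : ℝ) : ‖haar1 j m x‖ ≤ 1 := by
  unfold haar1
  split_ifs <;> simp

lemma integrableOn_ite_lt (z : ℝ) :
    IntegrableOn (fun t ↦ if z < t then (1 : ℝ) else 0) (Set.Icc 0 1) := by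
  have hconst : IntegrableOn (fun _ ↦ (1 : ℝ)) (Set.Icc (0 : ℝ) 1) := integrableOn_const (by simp)
  exact hconst.indicator measurableSet_Ioi

lemma integrableOn_mul_haar1 {f : ℝ → ℝ} (hf : IntegrableOn f (Set.Icc 0 1)) (j : ℤ) (m : ℕ) :
    IntegrableOn (fun t ↦ f t * haar1 j m t) (Set.Icc 0 1) :=
  Integrable.mul_bdd hf (measurable_haar1 j m).aestronglyMeasurable
    (.of_forall (norm_haar1_le_one j m))

lemma integrableOn_mul_indicator_one {f : ℝ → ℝ} (hf : IntegrableOn f (Set.Icc 0 1)) (u v : ℝ) :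
    IntegrableOn (fun t ↦ f t * (Set.Ico u v).indicator 1 t) (Set.Icc 0 1) := by
  refine (hf.indicator (measurableSet_Ico (a := u) (b := v))).congr_fun (fun t _ ↦ ?_)
    measurableSet_Icc
  simp [Set.indicator_apply]

lemma setIntegral_mul_indicator_one {u v : ℝ} (hu : 0 ≤ u) (hv : v ≤ 1) (f : ℝ → ℝ) :
    ∫ t in Set.Icc 0 1, f t * (Set.Ico u v).indicator 1 t = ∫ t in Set.Ico u v, f t := by
  have hsub : Set.Icc (0 : ℝ) 1 ∩ Set.Ico u v = Set.Ico u v :=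
    Set.inter_eq_right.2 fun t ht ↦ ⟨hu.trans ht.1, ht.2.le.trans hv⟩
  rw [← hsub, ← setIntegral_indicator measurableSet_Ico, hsub]
  simp only [Set.indicator_apply, Pi.one_apply, mul_ite, mul_one, mul_zero]

lemma setIntegral_ite_lt_mul_indicator {u v : ℝ} (hu : 0 ≤ u) (hv : v ≤ 1) (z : ℝ) :
    ∫ t in Set.Icc (0 : ℝ) 1, (if z < t then 1 else 0) * (Set.Ico u v).indicator 1 t =
      max 0 (v - max z u) := by
  have hite : (fun t : ℝ ↦ if z < t then (1 : ℝ) else 0) = (Set.Ioi z).indicator 1 := rfl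
  have hae : (Set.Ico u v ∩ Set.Ioi z : Set ℝ) =ᵐ[volume] Set.Ico (max z u) v := by
    rw [Set.inter_comm, ← Set.Ici_inter_Iio, ← Set.Ici_inter_Iio, ← Set.Ici_inter_Ici,
      Set.inter_assoc]
    exact Ioi_ae_eq_Ici.inter (ae_eq_refl _)
  rw [setIntegral_mul_indicator_one hu hv, hite, setIntegral_indicator measurableSet_Ioi,
    setIntegral_congr_set hae]
  simp [Measure.real, max_comm, ENNReal.toReal_ofReal']

lemma setIntegral_id_mul_indicator {u v : ℝ} (hu : 0 ≤ u) (huv : u ≤ v) (hv : v ≤ 1) :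
    ∫ t in Set.Icc (0 : ℝ) 1, t * (Set.Ico u v).indicator 1 t = (v ^ 2 - u ^ 2) / 2 := by
  rw [setIntegral_mul_indicator_one hu hv, integral_Ico_eq_integral_Ioc,
    ← intervalIntegral.integral_of_le huv, integral_id]

lemma haarTail_neg_one (m : ℕ) {z : ℝ} (hz : z ∈ Set.Icc (0 : ℝ) 1) :
    haarTail (-1) m z = 1 - z := by
  rw [haarTail, haar1_neg_one, setIntegral_ite_lt_mul_indicator le_rfl le_rfl, max_eq_left hz.1,
    max_eq_right (by linarith [hz.2])]

lemma haarMoment_neg_one (m : ℕ) : haarMoment (-1) m = 1 / 2 := by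
  rw [haarMoment, haar1_neg_one, setIntegral_id_mul_indicator le_rfl zero_le_one le_rfl]
  norm_num

lemma dyadicTent_eq_max_min (j m : ℕ) (z : ℝ) :
    dyadicTent j m z = max 0 (min (z - m / 2 ^ j) ((m + 1) / 2 ^ j - z)) := by
  have hpow : (0 : ℝ) < 2 ^ j := by positivity
  rw [dyadicTent, tent, ← max_div_div_right hpow.le, ← min_div_div_right hpow.le, zero_div]
  congr 2 <;> field_simp
  ring

lemma max_sub_midpoint_sub_max {a b : ℝ} (hab : a < b) (z : ℝ) :
    max 0 ((a + b) / 2 - max z a) - max 0 (b - max z ((a + b) / 2)) =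
      -max 0 (min (z - a) (b - z)) := by
  grind

lemma add_one_div_two_pow_le_one (hm : m < 2 ^ j) : ((m : ℝ) + 1) / 2 ^ j ≤ 1 := by
  rw [div_le_one (by positivity)]
  exact_mod_cast hm

lemma haarTail_natCast (hm : m < 2 ^ j) (z : ℝ) : haarTail j m z = -dyadicTent j m z := by
  have hleft : (0 : ℝ) ≤ m / 2 ^ j := by positivity
  have hright := add_one_div_two_pow_le_one hm
  have hmid : ((m : ℝ) + 1 / 2) / 2 ^ j = (m / 2 ^ j + (m + 1) / 2 ^ j) / 2 := by ring
  have hlt : (m : ℝ) / 2 ^ j < (m + 1) / 2 ^ j := by gcongr; linarith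
  have hint (u v : ℝ) := integrableOn_mul_indicator_one (integrableOn_ite_lt z) u v
  simp only [haarTail, haar1_natCast, Pi.sub_apply, mul_sub]
  rw [integral_sub (hint _ _) (hint _ _), hmid,
    setIntegral_ite_lt_mul_indicator hleft (by linarith),
    setIntegral_ite_lt_mul_indicator (by linarith) hright, dyadicTent_eq_max_min,
    max_sub_midpoint_sub_max hlt]

lemma haarMoment_natCast (hm : m < 2 ^ j) : haarMoment j m = -(1 / (4 * 4 ^ j)) := by
  have hleft : (0 : ℝ) ≤ m / 2 ^ j := by positivity
  have hright := add_one_div_two_pow_le_one hm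
  have hlm : (m : ℝ) / 2 ^ j ≤ (m + 1 / 2) / 2 ^ j := by gcongr; linarith
  have hmr : ((m : ℝ) + 1 / 2) / 2 ^ j ≤ (m + 1) / 2 ^ j := by gcongr; linarith
  have hint (u v : ℝ) :=
    integrableOn_mul_indicator_one (continuous_id'.integrableOn_Icc (a := 0) (b := 1)) u v
  simp only [haarMoment, haar1_natCast, Pi.sub_apply, mul_sub]
  rw [integral_sub (hint _ _) (hint _ _), setIntegral_id_mul_indicator hleft hlm (hmr.trans hright),
    setIntegral_id_mul_indicator (hleft.trans hlm) hmr hright, four_pow_eq]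
  field_simp
  ring

lemma volume_restrict_Icc_zero_one_prod :
    (volume : Measure (ℝ × ℝ)).restrict (Set.Icc 0 1) =
      (volume.restrict (Set.Icc 0 1)).prod (volume.restrict (Set.Icc 0 1)) := by
  rw [Measure.prod_restrict, ← Measure.volume_eq_prod, Set.Icc_prod_Icc]
  rfl

lemma natCast_countIn {ι : Type*} [Fintype ι] {P : ι → ℝ × ℝ} (hP : ∀ i, 0 ≤ P i) (t : ℝ × ℝ) :
    (countIn P t : ℝ) =
      ∑ i, (if (P i).1 < t.1 then (1 : ℝ) else 0) * (if (P i).2 < t.2 then 1 else 0) := by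
  simp only [countIn, Finset.card_filter, Nat.cast_sum]
  refine Finset.sum_congr rfl fun i _ ↦ ?_
  have h1 : 0 ≤ (P i).1 := (hP i).1
  have h2 : 0 ≤ (P i).2 := (hP i).2
  by_cases hlt : (P i).1 < t.1 <;> simp [hlt, h1, h2]

lemma haarCoeff_eq {ι : Type*} [Fintype ι] {P : ι → ℝ × ℝ} (hP : ∀ i, 0 ≤ P i)
    (j₁ j₂ : ℤ) (m₁ m₂ : ℕ) :
    haarCoeff P (j₁, j₂) (m₁, m₂) =
      (∑ i, haarTail j₁ m₁ (P i).1 * haarTail j₂ m₂ (P i).2) / Fintype.card ι -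
        haarMoment j₁ m₁ * haarMoment j₂ m₂ := by
  have hsplit (t : ℝ × ℝ) : localDisc P t * haar2 (j₁, j₂) (m₁, m₂) t =
      (∑ i, ((if (P i).1 < t.1 then 1 else 0) * haar1 j₁ m₁ t.1) *
        ((if (P i).2 < t.2 then 1 else 0) * haar1 j₂ m₂ t.2)) / Fintype.card ι -
      (t.1 * haar1 j₁ m₁ t.1) * (t.2 * haar1 j₂ m₂ t.2) := by
    rw [localDisc, haar2, natCast_countIn hP, sub_mul, div_mul_eq_mul_div, Finset.sum_mul]
    congr 1
    · exact congrArg (· / _) (Finset.sum_congr rfl fun i _ ↦ by ring)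
    · ring
  have hcount (i : ι) := (integrableOn_mul_haar1 (integrableOn_ite_lt (P i).1) j₁ m₁).mul_prod
    (integrableOn_mul_haar1 (integrableOn_ite_lt (P i).2) j₂ m₂)
  have hvol := (integrableOn_mul_haar1 continuous_id'.integrableOn_Icc j₁ m₁).mul_prod
    (integrableOn_mul_haar1 continuous_id'.integrableOn_Icc j₂ m₂)
  rw [haarCoeff, volume_restrict_Icc_zero_one_prod]
  simp only [hsplit]
  rw [integral_sub ((integrable_finsetSum _ fun i _ ↦ hcount i).div_const _) hvol, integral_div,
    integral_finsetSum _ fun i _ ↦ hcount i]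
  congr 2
  · exact Finset.sum_congr rfl fun i _ ↦
      integral_prod_mul (fun t ↦ (if (P i).1 < t then 1 else 0) * haar1 j₁ m₁ t)
        fun t ↦ (if (P i).2 < t then 1 else 0) * haar1 j₂ m₂ t
  · exact integral_prod_mul (fun t ↦ t * haar1 j₁ m₁ t) fun t ↦ t * haar1 j₂ m₂ t

end HaarIntegrals

section HaarCoefficients

variable {n k j₁ j₂ m m₁ m₂ : ℕ}

lemma hammersleyShifted_nonneg (σ t : Fin n → Bool) : 0 ≤ hammersleyShifted n σ t :=
  ⟨(hammersleyShifted_fst_mem σ t).1, (hammersleyShifted_snd_mem σ t).1⟩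

lemma haarCoeff_hammersleyShifted (σ : Fin n → Bool) (j₁ j₂ : ℤ) (m₁ m₂ : ℕ) :
    haarCoeff (hammersleyShifted n σ) (j₁, j₂) (m₁, m₂) =
      (∑ t, haarTail j₁ m₁ (hammersleyShifted n σ t).1 *
        haarTail j₂ m₂ (hammersleyShifted n σ t).2) / 2 ^ n -
        haarMoment j₁ m₁ * haarMoment j₂ m₂ := by
  simp [haarCoeff_eq (hammersleyShifted_nonneg σ)]

lemma haarCoeff_swap (σ : Fin n → Bool) (j₁ j₂ : ℤ) (m₁ m₂ : ℕ) :
    haarCoeff (hammersleyShifted n σ) (j₁, j₂) (m₁, m₂) =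
      haarCoeff (hammersleyShifted n (σ ∘ Fin.rev)) (j₂, j₁) (m₂, m₁) := by
  rw [haarCoeff_hammersleyShifted, haarCoeff_hammersleyShifted, sum_fst_mul_snd_swap,
    mul_comm (haarMoment _ _)]

lemma haarTail_neg_one_fst (σ t : Fin n → Bool) (m : ℕ) :
    haarTail (-1) m (hammersleyShifted n σ t).1 = 1 - (hammersleyShifted n σ t).1 :=
  haarTail_neg_one m ⟨(hammersleyShifted_fst_mem σ t).1,
    (hammersleyShifted_fst_mem σ t).2.trans (sub_le_self _ (by positivity))⟩

lemma haarTail_neg_one_snd (σ t : Fin n → Bool) (m : ℕ) :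
    haarTail (-1) m (hammersleyShifted n σ t).2 = 1 - (hammersleyShifted n σ t).2 := by
  rw [← Prod.fst_swap, ← hammersleyShifted_reverseShift, haarTail_neg_one_fst]

lemma haarCoeff_neg_one_neg_one (σ : Fin n → Bool) :
    haarCoeff (hammersleyShifted n σ) (-1, -1) (m₁, m₂) =
      1 / (2 * 2 ^ n) + 1 / (4 * 4 ^ n) + (2 * zeroCount σ - n) / (8 * 2 ^ n) := by
  have hexpand (x y : ℝ) : (1 - x) * (1 - y) = 1 - x - y + x * y := by ring
  simp only [haarCoeff_hammersleyShifted, haarTail_neg_one_fst, haarTail_neg_one_snd,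
    haarMoment_neg_one, hexpand, Finset.sum_add_distrib, Finset.sum_sub_distrib,
    sum_hammersleyShifted_fst, sum_hammersleyShifted_snd, sum_hammersleyShifted_fst_mul_snd,
    Finset.sum_const, Finset.card_univ, Fintype.card_fun, Fintype.card_bool, Fintype.card_fin,
    nsmul_eq_mul]
  rw [four_pow_eq]
  push_cast
  field_simp
  ring

lemma haarCoeff_neg_one_natCast (hm : m < 2 ^ k) (σ : Fin n → Bool) (m₀ : ℕ) :
    haarCoeff (hammersleyShifted n σ) (-1, k) (m₀, m) =
      -((∑ t, (1 - (hammersleyShifted n σ t).1) * dyadicTent k m (hammersleyShifted n σ t).2 -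
        2 ^ n / (8 * 4 ^ k)) / 2 ^ n) := by
  simp only [haarCoeff_hammersleyShifted, haarTail_neg_one_fst, haarTail_natCast hm,
    haarMoment_neg_one, haarMoment_natCast hm, mul_neg, Finset.sum_neg_distrib]
  field_simp
  ring

lemma haarCoeff_natCast_natCast (hm₁ : m₁ < 2 ^ j₁) (hm₂ : m₂ < 2 ^ j₂) (σ : Fin n → Bool) :
    haarCoeff (hammersleyShifted n σ) (j₁, j₂) (m₁, m₂) =
      (∑ t, dyadicTent j₁ m₁ (hammersleyShifted n σ t).1 *
        dyadicTent j₂ m₂ (hammersleyShifted n σ t).2 - 2 ^ n / (16 * 4 ^ (j₁ + j₂))) / 2 ^ n := by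
  simp only [haarCoeff_hammersleyShifted, haarTail_natCast hm₁, haarTail_natCast hm₂,
    haarMoment_natCast hm₁, haarMoment_natCast hm₂, neg_mul_neg, pow_add]
  field_simp
  ring

lemma haarCoeff_neg_one_neg_one_sq_le (σ : Fin n → Bool) :
    haarCoeff (hammersleyShifted n σ) (-1, -1) (m₁, m₂) ^ 2 ≤
      (2 + (2 * (zeroCount σ : ℝ) - n) ^ 2) / 4 ^ n := by
  have hone : (1 : ℝ) ≤ 2 ^ n := one_le_pow₀ one_le_two
  have hinv0 : (0 : ℝ) ≤ 1 / 2 ^ n := by positivity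
  have hinv1 : (1 : ℝ) / 2 ^ n ≤ 1 := by rwa [div_le_one (by positivity)]
  have hcoeff : haarCoeff (hammersleyShifted n σ) (-1, -1) (m₁, m₂) =
      (1 / 2 + 1 / 2 ^ n / 4 + (2 * zeroCount σ - n) / 8) / 2 ^ n := by
    rw [haarCoeff_neg_one_neg_one, four_pow_eq]
    field_simp
  rw [hcoeff, div_pow, four_pow_eq, ← sq (2 ^ n : ℝ)]
  gcongr
  set D : ℝ := 2 * zeroCount σ - n
  nlinarith [sq_nonneg (1 / 2 + 1 / 2 ^ n / 4 - D / 8)]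

lemma abs_haarCoeff_neg_one_natCast_le (hm : m < 2 ^ k) (σ : Fin n → Bool) (m₀ : ℕ) :
    |haarCoeff (hammersleyShifted n σ) (-1, k) (m₀, m)| ≤ 1 / (2 ^ k * 2 ^ max n k) := by
  rw [haarCoeff_neg_one_natCast hm, abs_neg, abs_div, abs_of_pos (pow_pos two_pos n : (0 : ℝ) < _),
    div_le_iff₀ (by positivity)]
  calc _ ≤ (2 : ℝ) ^ n / (4 * 2 ^ k * 2 ^ max n k) := abs_sum_one_sub_mul_dyadicTent_sub_le hm σ
    _ ≤ 2 ^ n / (1 * 2 ^ k * 2 ^ max n k) := by gcongr; norm_num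
    _ = 1 / (2 ^ k * 2 ^ max n k) * 2 ^ n := by rw [one_mul, one_div_mul_eq_div]

lemma abs_haarCoeff_le_of_add_two_le (hn : j₁ + j₂ + 2 ≤ n) (hm₁ : m₁ < 2 ^ j₁)
    (hm₂ : m₂ < 2 ^ j₂) (σ : Fin n → Bool) :
    |haarCoeff (hammersleyShifted n σ) (j₁, j₂) (m₁, m₂)| ≤ 1 / 4 ^ n := by
  rw [haarCoeff_natCast_natCast hm₁ hm₂, abs_div, abs_of_pos (pow_pos two_pos n : (0 : ℝ) < _),
    div_le_iff₀ (by positivity)]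
  calc _ ≤ 1 / (4 * 2 ^ n) := abs_sum_dyadicTent_mul_dyadicTent_sub_le hn hm₁ hm₂ σ
    _ ≤ 1 / (1 * 2 ^ n) := by gcongr; norm_num
    _ = 1 / 4 ^ n * 2 ^ n := by
      rw [four_pow_eq]
      field_simp

lemma abs_haarCoeff_le_of_le_add_one (hn : n ≤ j₁ + j₂ + 1) (hm₁ : m₁ < 2 ^ j₁)
    (hm₂ : m₂ < 2 ^ j₂) (σ : Fin n → Bool) :
    |haarCoeff (hammersleyShifted n σ) (j₁, j₂) (m₁, m₂)| ≤ 1 / (2 ^ n * 2 ^ (j₁ + j₂)) := by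
  rw [haarCoeff_natCast_natCast hm₁ hm₂, abs_div, abs_of_pos (pow_pos two_pos n : (0 : ℝ) < _),
    div_le_iff₀ (by positivity)]
  have hvol : (2 : ℝ) ^ n / (16 * 4 ^ (j₁ + j₂)) ≤ 1 / (2 * 2 ^ (j₁ + j₂)) := by
    have hpow : (2 : ℝ) ^ n ≤ 2 ^ (j₁ + j₂ + 1) := pow_le_pow_right₀ one_le_two hn
    rw [pow_succ] at hpow
    rw [four_pow_eq, div_le_div_iff₀ (by positivity) (by positivity)]
    nlinarith [pow_pos (two_pos (α := ℝ)) (j₁ + j₂)]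
  calc _ ≤ 1 / (2 * 2 ^ (j₁ + j₂)) :=
        abs_sub_le_of_nonneg_of_le (sum_dyadicTent_mul_dyadicTent_nonneg σ)
          (sum_dyadicTent_mul_dyadicTent_le hn hm₁ hm₂ σ) (by positivity) hvol
    _ ≤ 1 / (1 * 2 ^ (j₁ + j₂)) := by gcongr; norm_num
    _ = 1 / (2 ^ n * 2 ^ (j₁ + j₂)) * 2 ^ n := by field_simp

lemma floor_mul_two_pow_eq {z : ℝ} (hz : z ∈ Set.Ico ((m : ℝ) / 2 ^ k) ((m + 1) / 2 ^ k)) :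
    ⌊z * 2 ^ k⌋₊ = m := by
  rw [Set.mem_Ico, div_le_iff₀ (by positivity), lt_div_iff₀ (by positivity)] at hz
  exact (Nat.floor_eq_iff ((Nat.cast_nonneg m).trans hz.1)).2 hz

lemma dyadicTent_of_floor_ne {z : ℝ} (hz : ⌊z * 2 ^ k⌋₊ ≠ m) : dyadicTent k m z = 0 := by
  contrapose! hz
  apply floor_mul_two_pow_eq
  rw [dyadicTent_eq_max_min] at hz
  have hpos := (lt_max_iff.1 ((le_max_left _ _).lt_of_ne' hz)).resolve_left (lt_irrefl 0)
  exact ⟨by linarith [(lt_min_iff.1 hpos).1], by linarith [(lt_min_iff.1 hpos).2]⟩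

/-- The positions `m` for which the dyadic box `I_{j,m}`, `j = (j₁, j₂)`, contains a point
of `P`. -/
noncomputable def occupiedBoxes {ι : Type*} [Fintype ι] (P : ι → ℝ × ℝ) (j₁ j₂ : ℕ) :
    Finset (ℕ × ℕ) :=
  Finset.univ.image fun i ↦ (⌊(P i).1 * 2 ^ j₁⌋₊, ⌊(P i).2 * 2 ^ j₂⌋₊)

lemma card_occupiedBoxes_le {ι : Type*} [Fintype ι] (P : ι → ℝ × ℝ) (j₁ j₂ : ℕ) :
    (occupiedBoxes P j₁ j₂).card ≤ Fintype.card ι :=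
  Finset.card_image_le

lemma abs_haarCoeff_le_of_notMem_occupiedBoxes (σ : Fin n → Bool)
    (hm : (m₁, m₂) ∉ occupiedBoxes (hammersleyShifted n σ) j₁ j₂) (hm₁ : m₁ < 2 ^ j₁)
    (hm₂ : m₂ < 2 ^ j₂) :
    |haarCoeff (hammersleyShifted n σ) (j₁, j₂) (m₁, m₂)| ≤ 1 / 4 ^ (j₁ + j₂) := by
  have hsum : ∑ t, dyadicTent j₁ m₁ (hammersleyShifted n σ t).1 *
      dyadicTent j₂ m₂ (hammersleyShifted n σ t).2 = 0 := by
    refine Finset.sum_eq_zero fun t _ ↦ ?_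
    contrapose! hm
    have hfloor₁ := mt dyadicTent_of_floor_ne (left_ne_zero_of_mul hm)
    have hfloor₂ := mt dyadicTent_of_floor_ne (right_ne_zero_of_mul hm)
    exact Finset.mem_image.2
      ⟨t, Finset.mem_univ t, Prod.ext (not_not.1 hfloor₁) (not_not.1 hfloor₂)⟩
  calc |haarCoeff (hammersleyShifted n σ) (j₁, j₂) (m₁, m₂)|
    _ = 1 / (16 * 4 ^ (j₁ + j₂)) := by
        rw [haarCoeff_natCast_natCast hm₁ hm₂, hsum, zero_sub, neg_div, abs_neg,
          abs_of_pos (by positivity)]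
        field_simp
    _ ≤ 1 / (1 * 4 ^ (j₁ + j₂)) := by gcongr; norm_num
    _ = _ := by rw [one_mul]

end HaarCoefficients

section ShapeTerms

lemma dyadicI_of_lt {j : ℤ} {m : ℕ} (hm : m < 2 ^ j.toNat) :
    dyadicI j m = Set.Ico ((m : ℝ) / 2 ^ j.toNat) ((m + 1) / 2 ^ j.toNat) := by
  obtain rfl | hj := eq_or_ne j (-1)
  · obtain rfl : m = 0 := by simpa using hm
    simp [dyadicI]
  · rw [dyadicI, if_neg hj]

lemma measurableSet_dyadicI (j : ℤ) (m : ℕ) : MeasurableSet (dyadicI j m) := by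
  unfold dyadicI
  split_ifs <;> exact measurableSet_Ico

lemma dyadicI_subset_Icc {j : ℤ} {m : ℕ} (hm : m < 2 ^ j.toNat) :
    dyadicI j m ⊆ Set.Icc 0 1 := by
  rw [dyadicI_of_lt hm]
  exact Set.Ico_subset_Icc_self.trans
    (Set.Icc_subset_Icc (by positivity) (add_one_div_two_pow_le_one hm))

lemma volume_real_dyadicI {j : ℤ} {m : ℕ} (hm : m < 2 ^ j.toNat) :
    volume.real (dyadicI j m) = 1 / 2 ^ j.toNat := by
  rw [dyadicI_of_lt hm, Real.volume_real_Ico_of_le (by gcongr; linarith)]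
  ring

lemma floor_eq_of_mem_dyadicI {j : ℤ} {m : ℕ} (hm : m < 2 ^ j.toNat) {x : ℝ}
    (hx : x ∈ dyadicI j m) : ⌊x * 2 ^ j.toNat⌋₊ = m :=
  floor_mul_two_pow_eq (dyadicI_of_lt hm ▸ hx)

/-- The index set `D_j` of the positions of the Haar functions of shape `j`. -/
def haarIndices (j : ℤ × ℤ) : Finset (ℕ × ℕ) :=
  Finset.range (2 ^ j.1.toNat) ×ˢ Finset.range (2 ^ j.2.toNat)

lemma mem_haarIndices {j : ℤ × ℤ} {m : ℕ × ℕ} :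
    m ∈ haarIndices j ↔ m.1 < 2 ^ j.1.toNat ∧ m.2 < 2 ^ j.2.toNat := by
  simp only [haarIndices, Finset.mem_product, Finset.mem_range]

lemma card_haarIndices (j : ℤ × ℤ) : (haarIndices j).card = 2 ^ (j.1.toNat + j.2.toNat) := by
  rw [haarIndices, Finset.card_product, Finset.card_range, Finset.card_range, pow_add]

lemma pairwiseDisjoint_dyadicI (j : ℤ × ℤ) :
    (haarIndices j : Set (ℕ × ℕ)).PairwiseDisjoint
      fun m ↦ dyadicI j.1 m.1 ×ˢ dyadicI j.2 m.2 := by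
  refine fun m hm m' hm' hne ↦ Set.disjoint_left.2 fun x hx hx' ↦ hne ?_
  obtain ⟨hm₁, hm₂⟩ := mem_haarIndices.1 hm
  obtain ⟨hm₁', hm₂'⟩ := mem_haarIndices.1 hm'
  exact Prod.ext
    ((floor_eq_of_mem_dyadicI hm₁ hx.1).symm.trans (floor_eq_of_mem_dyadicI hm₁' hx'.1))
    ((floor_eq_of_mem_dyadicI hm₂ hx.2).symm.trans (floor_eq_of_mem_dyadicI hm₂' hx'.2))

lemma setIntegral_indicator_dyadicI {j : ℤ × ℤ} {m : ℕ × ℕ} (hm : m ∈ haarIndices j) :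
    ∫ x in Set.Icc (0 : ℝ × ℝ) 1, (dyadicI j.1 m.1 ×ˢ dyadicI j.2 m.2).indicator (fun _ ↦ 1) x =
      (1 : ℝ) / 2 ^ (j.1.toNat + j.2.toNat) := by
  obtain ⟨hm₁, hm₂⟩ := mem_haarIndices.1 hm
  have hsub : dyadicI j.1 m.1 ×ˢ dyadicI j.2 m.2 ⊆ Set.Icc (0 : ℝ × ℝ) 1 := by
    rw [← Prod.mk_zero_zero, ← Prod.mk_one_one, ← Set.Icc_prod_Icc]
    exact Set.prod_mono (dyadicI_subset_Icc hm₁) (dyadicI_subset_Icc hm₂)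
  rw [setIntegral_indicator ((measurableSet_dyadicI _ _).prod (measurableSet_dyadicI _ _)),
    Set.inter_eq_right.2 hsub, setIntegral_const, smul_eq_mul, mul_one, Measure.volume_eq_prod,
    measureReal_prod_prod, volume_real_dyadicI hm₁, volume_real_dyadicI hm₂, pow_add,
    one_div_mul_one_div]

lemma abs_sum_mul_indicator_one_rpow {α ι : Type*} {s : Finset ι} {A : ι → Set α}
    (hA : (s : Set ι).PairwiseDisjoint A) (c : ι → ℝ) {r : ℝ} (hr : r ≠ 0) (x : α) :
    |∑ i ∈ s, c i * (A i).indicator (fun _ ↦ 1) x| ^ r =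
      ∑ i ∈ s, |c i| ^ r * (A i).indicator (fun _ ↦ 1) x := by
  by_cases hx : ∃ i ∈ s, x ∈ A i
  · obtain ⟨i, hi, hxi⟩ := hx
    have hother (k : ι) (hk : k ∈ s) (hki : k ≠ i) : x ∉ A k :=
      Set.disjoint_right.1 (hA hk hi hki) hxi
    rw [Finset.sum_eq_single_of_mem i hi fun k hk hki ↦ by simp [hother k hk hki],
      Finset.sum_eq_single_of_mem i hi fun k hk hki ↦ by simp [hother k hk hki]]
    simp [hxi]
  · push Not at hx
    rw [Finset.sum_eq_zero fun i hi ↦ by simp [hx i hi],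
      Finset.sum_eq_zero fun i hi ↦ by simp [hx i hi], abs_zero, Real.zero_rpow hr]

variable {p : ℝ} {ι : Type*} [Fintype ι]

lemma lpHalfTerm_eq (hp : 0 < p) (P : ι → ℝ × ℝ) (j : ℤ × ℤ) :
    lpHalfTerm p P j = 4 ^ (j.1.toNat + j.2.toNat) *
      ((∑ m ∈ haarIndices j, |haarCoeff P j m| ^ p) / 2 ^ (j.1.toNat + j.2.toNat)) ^ (2 / p) := by
  have hcoeff (m : ℕ × ℕ) : |haarCoeff P j m ^ 2| ^ (p / 2) = |haarCoeff P j m| ^ p := by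
    rw [abs_pow, ← Real.rpow_natCast, ← Real.rpow_mul (abs_nonneg _), Nat.cast_ofNat,
      mul_div_cancel₀ _ two_ne_zero]
  have hint (m : ℕ × ℕ) : IntegrableOn
      ((dyadicI j.1 m.1 ×ˢ dyadicI j.2 m.2).indicator fun _ ↦ (1 : ℝ)) (Set.Icc 0 1) :=
    (integrableOn_const isCompact_Icc.measure_ne_top).indicator
      ((measurableSet_dyadicI _ _).prod (measurableSet_dyadicI _ _))
  simp only [lpHalfTerm, ← Finset.sum_product', Prod.mk.eta, ← haarIndices.eq_def,
    abs_sum_mul_indicator_one_rpow (pairwiseDisjoint_dyadicI j) _ (half_pos hp).ne', hcoeff]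
  rw [integral_finsetSum _ fun m _ ↦ (hint m).const_mul _, pow_mul, Finset.sum_div,
    Finset.sum_congr rfl fun m hm ↦ by
      rw [integral_const_mul, setIntegral_indicator_dyadicI hm, mul_one_div]]
  norm_num only

lemma lpHalfTerm_nonneg (hp : 0 < p) (P : ι → ℝ × ℝ) (j : ℤ × ℤ) : 0 ≤ lpHalfTerm p P j := by
  rw [lpHalfTerm_eq hp]
  positivity

lemma rpow_rpow_two_div (hp : 0 < p) {M : ℝ} (hM : 0 ≤ M) : (M ^ p) ^ (2 / p) = M ^ 2 := by
  rw [← Real.rpow_mul hM, mul_div_cancel₀ _ hp.ne', Real.rpow_two]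

lemma add_rpow_le_two_rpow_mul {x y q : ℝ} (hx : 0 ≤ x) (hy : 0 ≤ y) (hq : 0 ≤ q) :
    (x + y) ^ q ≤ 2 ^ q * (x ^ q + y ^ q) := by
  have hmax : max x y ^ q ≤ x ^ q + y ^ q := by
    rcases max_choice x y with h | h <;> rw [h]
    · exact le_add_of_nonneg_right (by positivity)
    · exact le_add_of_nonneg_left (by positivity)
  calc (x + y) ^ q ≤ (2 * max x y) ^ q := by
        gcongr
        linarith [le_max_left x y, le_max_right x y]
    _ = 2 ^ q * max x y ^ q := Real.mul_rpow zero_le_two (le_max_of_le_left hx)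
    _ ≤ 2 ^ q * (x ^ q + y ^ q) := by gcongr

lemma lpHalfTerm_le_of_abs_haarCoeff_le (hp : 0 < p) {P : ι → ℝ × ℝ} {j : ℤ × ℤ} {M : ℝ}
    (hM : 0 ≤ M) (h : ∀ m ∈ haarIndices j, |haarCoeff P j m| ≤ M) :
    lpHalfTerm p P j ≤ 4 ^ (j.1.toNat + j.2.toNat) * M ^ 2 := by
  rw [lpHalfTerm_eq hp, ← rpow_rpow_two_div hp hM]
  gcongr
  rw [div_le_iff₀' (by positivity)]
  calc ∑ m ∈ haarIndices j, |haarCoeff P j m| ^ p ≤ ∑ _m ∈ haarIndices j, M ^ p := by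
        gcongr with m hm
        exact h m hm
    _ = 2 ^ (j.1.toNat + j.2.toNat) * M ^ p := by
        simp [card_haarIndices]

lemma lpHalfTerm_le_of_abs_haarCoeff_le_off (hp : 0 < p) {P : ι → ℝ × ℝ} {j : ℤ × ℤ}
    (B : Finset (ℕ × ℕ)) {M G : ℝ} (hM : 0 ≤ M) (hG : 0 ≤ G)
    (h : ∀ m ∈ haarIndices j, |haarCoeff P j m| ≤ M)
    (hB : ∀ m ∈ haarIndices j, m ∉ B → |haarCoeff P j m| ≤ G) :
    lpHalfTerm p P j ≤ 4 ^ (j.1.toNat + j.2.toNat) *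
      (2 ^ (2 / p) * (G ^ 2 + (B.card / 2 ^ (j.1.toNat + j.2.toNat)) ^ (2 / p) * M ^ 2)) := by
  rw [lpHalfTerm_eq hp]
  gcongr
  set l := j.1.toNat + j.2.toNat with hl
  have hsum : ∑ m ∈ haarIndices j, |haarCoeff P j m| ^ p ≤ 2 ^ l * G ^ p + B.card * M ^ p := by
    rw [← Finset.sum_filter_not_add_sum_filter (haarIndices j) (· ∈ B)]
    gcongr
    · calc _ ≤ ∑ m ∈ haarIndices j with m ∉ B, G ^ p := by
            gcongr with m hm
            exact hB m (Finset.mem_filter.1 hm).1 (Finset.mem_filter.1 hm).2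
        _ ≤ ∑ _m ∈ haarIndices j, G ^ p := by
            gcongr
            exact Finset.filter_subset _ _
        _ = 2 ^ l * G ^ p := by simp [card_haarIndices, hl]
    · calc _ ≤ ∑ m ∈ haarIndices j with m ∈ B, M ^ p := by
            gcongr with m hm
            exact h m (Finset.mem_filter.1 hm).1
        _ ≤ ∑ _m ∈ B, M ^ p := by
            gcongr
            exact fun _ hm ↦ (Finset.mem_filter.1 hm).2
        _ = B.card * M ^ p := by simp
  calc _ ≤ (G ^ p + B.card / 2 ^ l * M ^ p) ^ (2 / p) := by
        gcongr
        rw [div_le_iff₀ (by positivity)]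
        exact hsum.trans_eq (by field_simp)
    _ ≤ 2 ^ (2 / p) * ((G ^ p) ^ (2 / p) + (B.card / 2 ^ l * M ^ p) ^ (2 / p)) :=
        add_rpow_le_two_rpow_mul (by positivity) (by positivity) (by positivity)
    _ = _ := by
        rw [Real.mul_rpow (by positivity) (by positivity), rpow_rpow_two_div hp hM,
          rpow_rpow_two_div hp hG]

lemma lpHalfTerm_swap (hp : 0 < p) {n : ℕ} (σ : Fin n → Bool) (j₁ j₂ : ℤ) :
    lpHalfTerm p (hammersleyShifted n σ) (j₁, j₂) =
      lpHalfTerm p (hammersleyShifted n (σ ∘ Fin.rev)) (j₂, j₁) := by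
  simp only [lpHalfTerm_eq hp, haarIndices, Finset.sum_product, add_comm j₁.toNat]
  rw [Finset.sum_comm]
  simp only [haarCoeff_swap σ]

end ShapeTerms

section ShapeBounds

variable {p : ℝ} {n : ℕ}

lemma lpHalfTerm_neg_one_neg_one_le (hp : 0 < p) (σ : Fin n → Bool) :
    lpHalfTerm p (hammersleyShifted n σ) (-1, -1) ≤
      (2 + (2 * (zeroCount σ : ℝ) - n) ^ 2) / 4 ^ n := by
  have hcoeff (m : ℕ × ℕ) : |haarCoeff (hammersleyShifted n σ) (-1, -1) m| ≤
      √((2 + (2 * (zeroCount σ : ℝ) - n) ^ 2) / 4 ^ n) :=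
    Real.abs_le_sqrt (haarCoeff_neg_one_neg_one_sq_le σ)
  refine (lpHalfTerm_le_of_abs_haarCoeff_le hp (Real.sqrt_nonneg _) fun m _ ↦ hcoeff m).trans_eq ?_
  rw [Real.sq_sqrt (by positivity)]
  simp

lemma lpHalfTerm_neg_one_natCast_le (hp : 0 < p) (σ : Fin n → Bool) (k : ℕ) :
    lpHalfTerm p (hammersleyShifted n σ) (-1, k) ≤ (1 / 4) ^ n * (1 / 4) ^ (k - n) := by
  have hmax : (1 / 4 : ℝ) ^ n * (1 / 4) ^ (k - n) = 1 / 4 ^ max n k := by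
    rw [← pow_add, one_div_pow]
    congr 2
    omega
  calc _ ≤ (4 : ℝ) ^ k * (1 / (2 ^ k * 2 ^ max n k)) ^ 2 := by
        simpa using lpHalfTerm_le_of_abs_haarCoeff_le (j := (-1, (k : ℤ))) hp (by positivity)
          fun m hm ↦ abs_haarCoeff_neg_one_natCast_le (mem_haarIndices.1 hm).2 σ m.1
    _ = (1 / 4) ^ n * (1 / 4) ^ (k - n) := by
        rw [hmax, four_pow_eq, four_pow_eq]
        field_simp

lemma lpHalfTerm_natCast_neg_one_le (hp : 0 < p) (σ : Fin n → Bool) (k : ℕ) :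
    lpHalfTerm p (hammersleyShifted n σ) (k, -1) ≤ (1 / 4) ^ n * (1 / 4) ^ (k - n) := by
  rw [lpHalfTerm_swap hp]
  exact lpHalfTerm_neg_one_natCast_le hp _ k

lemma lpHalfTerm_natCast_le_of_add_two_le (hp : 0 < p) {j₁ j₂ : ℕ} (hn : j₁ + j₂ + 2 ≤ n)
    (σ : Fin n → Bool) :
    lpHalfTerm p (hammersleyShifted n σ) (j₁, j₂) ≤
      (1 / 4) ^ n * (1 / 4) ^ (n - (j₁ + j₂)) := by
  obtain ⟨d, rfl⟩ := Nat.exists_eq_add_of_le (show j₁ + j₂ ≤ n by omega)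
  calc _ ≤ (4 : ℝ) ^ (j₁ + j₂) * (1 / 4 ^ (j₁ + j₂ + d)) ^ 2 := by
        simpa using lpHalfTerm_le_of_abs_haarCoeff_le hp (by positivity) fun m hm ↦
          abs_haarCoeff_le_of_add_two_le hn (mem_haarIndices.1 hm).1 (mem_haarIndices.1 hm).2 σ
    _ = _ := by
        rw [Nat.add_sub_cancel_left]
        simp only [pow_add, one_div_pow]
        field_simp

lemma lpHalfTerm_natCast_le_of_le_add_one (hp : 0 < p) {j₁ j₂ : ℕ} (hn : n ≤ j₁ + j₂ + 1)
    (σ : Fin n → Bool) :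
    lpHalfTerm p (hammersleyShifted n σ) (j₁, j₂) ≤ 2 ^ (2 / p) * ((1 / 4) ^ (j₁ + j₂) +
      (2 ^ n / 2 ^ (j₁ + j₂)) ^ (2 / p) * (1 / 4) ^ n) := by
  have hcard : ((occupiedBoxes (hammersleyShifted n σ) j₁ j₂).card : ℝ) ≤ 2 ^ n := by
    exact_mod_cast (card_occupiedBoxes_le (hammersleyShifted n σ) j₁ j₂).trans_eq (by simp)
  refine (lpHalfTerm_le_of_abs_haarCoeff_le_off hp (occupiedBoxes (hammersleyShifted n σ) j₁ j₂)
    (M := 1 / (2 ^ n * 2 ^ (j₁ + j₂))) (G := 1 / 4 ^ (j₁ + j₂)) (by positivity) (by positivity)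
    (fun m hm ↦ abs_haarCoeff_le_of_le_add_one hn (mem_haarIndices.1 hm).1
      (mem_haarIndices.1 hm).2 σ)
    (fun m hm hmB ↦ abs_haarCoeff_le_of_notMem_occupiedBoxes σ hmB (mem_haarIndices.1 hm).1
      (mem_haarIndices.1 hm).2)).trans ?_
  simp only [Int.toNat_natCast]
  calc _ ≤ (4 : ℝ) ^ (j₁ + j₂) * (2 ^ (2 / p) * ((1 / 4 ^ (j₁ + j₂)) ^ 2 +
          (2 ^ n / 2 ^ (j₁ + j₂)) ^ (2 / p) * (1 / (2 ^ n * 2 ^ (j₁ + j₂))) ^ 2)) := by gcongr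
    _ = _ := by
        simp only [one_div_pow, four_pow_eq]
        field_simp

lemma lpHalfTerm_natCast_natCast_le (hp : 0 < p) {ρ : ℝ} (hρ₄ : 1 / 4 ≤ ρ)
    (hρ₂ : (1 / 2) ^ (2 / p) ≤ ρ) (σ : Fin n → Bool) (j₁ j₂ : ℕ) :
    lpHalfTerm p (hammersleyShifted n σ) (j₁, j₂) ≤
      2 ^ (2 / p) * (4 + 2 ^ (2 / p)) * ((1 / 4) ^ n * ρ ^ Nat.dist n (j₁ + 1 + j₂)) := by
  have : 0 < ρ := by linarith
  have hQ : (1 : ℝ) ≤ 2 ^ (2 / p) := Real.one_le_rpow one_le_two (by positivity)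
  obtain hn | hn := le_or_gt (j₁ + j₂ + 2) n
  · calc _ ≤ (1 / 4) ^ n * (1 / 4 : ℝ) ^ (n - (j₁ + j₂)) :=
          lpHalfTerm_natCast_le_of_add_two_le hp hn σ
      _ ≤ (1 / 4) ^ n * (1 / 4) ^ Nat.dist n (j₁ + 1 + j₂) := by
          refine mul_le_mul_of_nonneg_left (pow_le_pow_of_le_one ?_ ?_ ?_) (by positivity)
          · norm_num
          · norm_num
          · rw [Nat.dist]; omega
      _ ≤ (1 / 4) ^ n * ρ ^ Nat.dist n (j₁ + 1 + j₂) := by gcongr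
      _ ≤ _ := le_mul_of_one_le_left (by positivity) (by nlinarith)
  · have hdist : j₁ + j₂ + 1 = n + Nat.dist n (j₁ + 1 + j₂) := by rw [Nat.dist]; omega
    set d := Nat.dist n (j₁ + 1 + j₂)
    have hfour : (1 / 4 : ℝ) ^ (j₁ + j₂) = 4 * ((1 / 4) ^ n * (1 / 4) ^ d) := by
      rw [← pow_add, ← hdist, pow_succ]
      ring
    have htwo : ((2 : ℝ) ^ n / 2 ^ (j₁ + j₂)) ^ (2 / p) =
        2 ^ (2 / p) * ((1 / 2) ^ (2 / p)) ^ d := by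
      have hratio : (2 : ℝ) ^ n / 2 ^ (j₁ + j₂) = 2 * (1 / 2) ^ d := by
        rw [one_div_pow, mul_one_div, div_eq_div_iff (by positivity) (by positivity), ← pow_add,
          ← hdist, pow_succ']
      rw [hratio, Real.mul_rpow zero_le_two (by positivity), Real.rpow_pow_comm (by norm_num)]
    calc _ ≤ 2 ^ (2 / p) * ((1 / 4) ^ (j₁ + j₂) +
            ((2 : ℝ) ^ n / 2 ^ (j₁ + j₂)) ^ (2 / p) * (1 / 4) ^ n) :=
          lpHalfTerm_natCast_le_of_le_add_one hp (by omega) σ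
      _ ≤ 2 ^ (2 / p) * (4 * ((1 / 4) ^ n * ρ ^ d) + 2 ^ (2 / p) * ρ ^ d * (1 / 4) ^ n) := by
          rw [hfour, htwo]
          gcongr
      _ = _ := by ring

end ShapeBounds

section Summation

lemma summable_and_tsum_le_of_le_of_succ_le {f g : ℕ → ℝ} (hf : ∀ k, 0 ≤ f k) {a : ℝ}
    (hzero : f 0 ≤ a) (hsucc : ∀ k, f (k + 1) ≤ g k) (hg : Summable g) :
    Summable f ∧ ∑' k, f k ≤ a + ∑' k, g k := by
  have htail : Summable fun k ↦ f (k + 1) := hg.of_nonneg_of_le (fun k ↦ hf (k + 1)) hsucc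
  have hsum : Summable f := (summable_nat_add_iff 1).1 htail
  exact ⟨hsum, hsum.tsum_eq_zero_add ▸ add_le_add hzero (htail.tsum_le_tsum hsucc hg)⟩

variable {ρ : ℝ}

lemma hasSum_pow_tsub (hρ₀ : 0 ≤ ρ) (hρ₁ : ρ < 1) (n : ℕ) :
    HasSum (fun k ↦ ρ ^ (k - n)) (n + (1 - ρ)⁻¹) := by
  have hhead : ∑ k ∈ Finset.range n, ρ ^ (k - n) = n := by
    rw [Finset.sum_congr rfl fun k hk ↦ by
      rw [Nat.sub_eq_zero_of_le (Finset.mem_range.1 hk).le, pow_zero]]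
    simp
  rw [add_comm, ← hhead, ← hasSum_nat_add_iff]
  simpa only [Nat.add_sub_cancel] using hasSum_geometric_of_lt_one hρ₀ hρ₁

lemma summable_pow_dist (hρ₀ : 0 ≤ ρ) (hρ₁ : ρ < 1) (n : ℕ) :
    Summable fun k ↦ ρ ^ Nat.dist n k := by
  rw [← summable_nat_add_iff n]
  simpa [Nat.dist] using summable_geometric_of_lt_one hρ₀ hρ₁

lemma tsum_pow_dist_le (hρ₀ : 0 ≤ ρ) (hρ₁ : ρ < 1) (n : ℕ) :
    ∑' k, ρ ^ Nat.dist n k ≤ 2 * (1 - ρ)⁻¹ := by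
  have htail : ∑' k, ρ ^ Nat.dist n (k + n) = (1 - ρ)⁻¹ := by
    simpa [Nat.dist] using tsum_geometric_of_lt_one hρ₀ hρ₁
  have hhead : ∑ k ∈ Finset.range n, ρ ^ Nat.dist n k ≤ (1 - ρ)⁻¹ :=
    calc ∑ k ∈ Finset.range n, ρ ^ Nat.dist n k ≤ ∑ k ∈ Finset.range n, ρ ^ (n - 1 - k) := by
          refine Finset.sum_le_sum fun k _ ↦ pow_le_pow_of_le_one hρ₀ hρ₁.le ?_
          rw [Nat.dist]
          omega
      _ = ∑ k ∈ Finset.range n, ρ ^ k := Finset.sum_range_reflect (ρ ^ ·) n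
      _ ≤ ∑' k, ρ ^ k :=
          (summable_geometric_of_lt_one hρ₀ hρ₁).sum_le_tsum _ fun k _ ↦ by positivity
      _ = (1 - ρ)⁻¹ := tsum_geometric_of_lt_one hρ₀ hρ₁
  rw [← (summable_pow_dist hρ₀ hρ₁ n).sum_add_tsum_nat_add n, htail]
  linarith

lemma pow_dist_add (n j k : ℕ) :
    ρ ^ Nat.dist n (j + k) = ρ ^ (j - n) * ρ ^ Nat.dist (n - j) k := by
  rw [← pow_add, Nat.dist, Nat.dist]
  congr 1
  omega

lemma summable_prod_and_tsum_le {f : ℕ × ℕ → ℝ} (hf : ∀ k, 0 ≤ f k) {a : ℝ} {g : ℕ → ℝ}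
    (hrow : ∀ j, Summable fun k ↦ f (j, k)) (hzero : ∑' k, f (0, k) ≤ a)
    (hsucc : ∀ j, ∑' k, f (j + 1, k) ≤ g j) (hg : Summable g) :
    Summable f ∧ ∑' k, f k ≤ a + ∑' j, g j := by
  obtain ⟨hsum, hle⟩ := summable_and_tsum_le_of_le_of_succ_le
    (fun j ↦ tsum_nonneg fun k ↦ hf (j, k)) hzero hsucc hg
  have hprod : Summable f := (summable_prod_of_nonneg hf).2 ⟨hrow, hsum⟩
  exact ⟨hprod, hprod.tsum_prod.trans_le hle⟩

variable {p : ℝ} {n : ℕ}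

lemma summable_and_tsum_lpHalfTerm_neg_one_le (hp : 0 < p) (hρ₄ : 1 / 4 ≤ ρ) (hρ₁ : ρ < 1)
    (σ : Fin n → Bool) :
    Summable (fun k : ℕ ↦ lpHalfTerm p (hammersleyShifted n σ) (-1, (k : ℤ) - 1)) ∧
      ∑' k : ℕ, lpHalfTerm p (hammersleyShifted n σ) (-1, (k : ℤ) - 1) ≤
        (1 / 4) ^ n * (2 + (2 * (zeroCount σ : ℝ) - n) ^ 2 + (n + (1 - ρ)⁻¹)) := by
  have hgeom := (hasSum_pow_tsub (by linarith) hρ₁ n).mul_left ((1 / 4) ^ n)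
  rw [mul_add, ← hgeom.tsum_eq]
  refine summable_and_tsum_le_of_le_of_succ_le (fun k ↦ lpHalfTerm_nonneg hp _ _) ?_ (fun k ↦ ?_)
    hgeom.summable
  · rw [one_div_pow, one_div_mul_eq_div]
    simpa using lpHalfTerm_neg_one_neg_one_le hp σ
  · rw [Nat.cast_succ, add_sub_cancel_right]
    refine (lpHalfTerm_neg_one_natCast_le hp σ k).trans ?_
    gcongr

lemma summable_and_tsum_lpHalfTerm_natCast_le (hp : 0 < p) (hρ₄ : 1 / 4 ≤ ρ)
    (hρ₂ : (1 / 2) ^ (2 / p) ≤ ρ) (hρ₁ : ρ < 1) (σ : Fin n → Bool) (j : ℕ) :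
    Summable (fun k : ℕ ↦ lpHalfTerm p (hammersleyShifted n σ) (j, (k : ℤ) - 1)) ∧
      ∑' k : ℕ, lpHalfTerm p (hammersleyShifted n σ) (j, (k : ℤ) - 1) ≤
        (1 / 4) ^ n * (1 + 2 ^ (2 / p) * (4 + 2 ^ (2 / p)) * (2 * (1 - ρ)⁻¹)) * ρ ^ (j - n) := by
  have hρ₀ : 0 ≤ ρ := by linarith
  have hrow : Summable fun k ↦ 2 ^ (2 / p) * (4 + 2 ^ (2 / p)) *
      ((1 / 4) ^ n * ρ ^ Nat.dist n (j + 1 + k)) := by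
    simp only [pow_dist_add]
    exact (((summable_pow_dist hρ₀ hρ₁ _).mul_left _).mul_left _).mul_left _
  obtain ⟨hsum, hle⟩ := summable_and_tsum_le_of_le_of_succ_le
    (f := fun k ↦ lpHalfTerm p (hammersleyShifted n σ) (j, (k : ℤ) - 1))
    (a := (1 / 4) ^ n * ρ ^ (j - n))
    (fun k ↦ lpHalfTerm_nonneg hp _ _)
    (by
      refine (lpHalfTerm_natCast_neg_one_le hp σ j).trans ?_
      gcongr)
    (fun k ↦ by
      rw [Nat.cast_succ, add_sub_cancel_right]
      exact lpHalfTerm_natCast_natCast_le hp hρ₄ hρ₂ σ j k) hrow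
  refine ⟨hsum, hle.trans ?_⟩
  have hpow : ρ ^ (j + 1 - n) ≤ ρ ^ (j - n) := pow_le_pow_of_le_one hρ₀ hρ₁.le (by omega)
  have hdist := tsum_pow_dist_le hρ₀ hρ₁ (n - (j + 1))
  simp only [pow_dist_add, tsum_mul_left]
  calc (1 / 4) ^ n * ρ ^ (j - n) + 2 ^ (2 / p) * (4 + 2 ^ (2 / p)) *
        ((1 / 4) ^ n * (ρ ^ (j + 1 - n) * ∑' k, ρ ^ Nat.dist (n - (j + 1)) k))
      ≤ (1 / 4) ^ n * ρ ^ (j - n) + 2 ^ (2 / p) * (4 + 2 ^ (2 / p)) *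
        ((1 / 4) ^ n * (ρ ^ (j - n) * (2 * (1 - ρ)⁻¹))) := by
        gcongr
    _ = _ := by ring

lemma summable_and_tsum_lpHalfTerm_le (hp : 0 < p) (hρ₄ : 1 / 4 ≤ ρ)
    (hρ₂ : (1 / 2) ^ (2 / p) ≤ ρ) (hρ₁ : ρ < 1) (σ : Fin n → Bool) :
    Summable (fun k : ℕ × ℕ ↦
      lpHalfTerm p (hammersleyShifted n σ) ((k.1 : ℤ) - 1, (k.2 : ℤ) - 1)) ∧
    ∑' k : ℕ × ℕ, lpHalfTerm p (hammersleyShifted n σ) ((k.1 : ℤ) - 1, (k.2 : ℤ) - 1) ≤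
      (1 / 4) ^ n * (2 + (2 * (zeroCount σ : ℝ) - n) ^ 2 +
        (2 + 2 ^ (2 / p) * (4 + 2 ^ (2 / p)) * (2 * (1 - ρ)⁻¹)) * (n + (1 - ρ)⁻¹)) := by
  obtain ⟨hrow₀, hle₀⟩ := summable_and_tsum_lpHalfTerm_neg_one_le hp hρ₄ hρ₁ σ
  have hrow := summable_and_tsum_lpHalfTerm_natCast_le hp hρ₄ hρ₂ hρ₁ σ
  have hgeom := (hasSum_pow_tsub (by linarith) hρ₁ n).mul_left
    ((1 / 4) ^ n * (1 + 2 ^ (2 / p) * (4 + 2 ^ (2 / p)) * (2 * (1 - ρ)⁻¹)))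
  obtain ⟨hsum, hle⟩ := summable_prod_and_tsum_le
    (f := fun k ↦ lpHalfTerm p (hammersleyShifted n σ) ((k.1 : ℤ) - 1, (k.2 : ℤ) - 1))
    (fun k ↦ lpHalfTerm_nonneg hp _ _)
    (fun j ↦ by cases j with
      | zero => simpa using hrow₀
      | succ j => simpa using (hrow j).1)
    (by simpa only [Nat.cast_zero, zero_sub] using hle₀) (fun j ↦ by simpa using (hrow j).2)
    hgeom.summable
  refine ⟨hsum, hle.trans_eq ?_⟩
  rw [hgeom.tsum_eq]
  ring

end Summation

lemma add_one_add_sq_le_of_abs_le_mul_sqrt {c D : ℝ} {n : ℕ} (hn : 0 < n) (hD : |D| ≤ c * √n) :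
    n + 1 + D ^ 2 ≤ (2 + c ^ 2) * n := by
  have hsq : D ^ 2 ≤ c ^ 2 * n := by
    simpa [mul_pow] using pow_le_pow_left₀ (abs_nonneg _) hD 2
  have hn' : (1 : ℝ) ≤ n := by exact_mod_cast hn
  linarith

theorem statement19_general (p : ℝ) (hp : 0 < p) :
    ∃ C : ℝ, 0 < C ∧ ∀ (n : ℕ) (σ : Fin n → Bool),
      Summable (fun k : ℕ × ℕ ↦
        lpHalfTerm p (hammersleyShifted n σ) ((k.1 : ℤ) - 1, (k.2 : ℤ) - 1)) ∧
      ∑' k : ℕ × ℕ, lpHalfTerm p (hammersleyShifted n σ) ((k.1 : ℤ) - 1, (k.2 : ℤ) - 1) ≤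
        C * (n + 1 + (2 * (zeroCount σ : ℝ) - n) ^ 2) / 2 ^ (2 * n) := by
  obtain ⟨ρ, hρ₄, hρ₂, hρ₁⟩ : ∃ ρ : ℝ, 1 / 4 ≤ ρ ∧ (1 / 2) ^ (2 / p) ≤ ρ ∧ ρ < 1 :=
    ⟨max (1 / 4) ((1 / 2) ^ (2 / p)), le_max_left _ _, le_max_right _ _, max_lt (by norm_num)
      (Real.rpow_lt_one (by norm_num) (by norm_num) (by positivity))⟩
  have hbound {n : ℕ} (σ : Fin n → Bool) := summable_and_tsum_lpHalfTerm_le hp hρ₄ hρ₂ hρ₁ σ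
  have hS : 1 ≤ (1 - ρ)⁻¹ := (one_le_inv₀ (by linarith)).2 (by linarith)
  generalize (1 - ρ)⁻¹ = S at hS hbound
  obtain ⟨W, hW⟩ : ∃ W : ℝ, W = 2 + 2 ^ (2 / p) * (4 + 2 ^ (2 / p)) * (2 * S) := ⟨_, rfl⟩
  have hW₀ : 0 < W := hW ▸ by positivity
  refine ⟨2 + W * S, by positivity, fun n σ ↦ ⟨(hbound σ).1, (hbound σ).2.trans ?_⟩⟩
  rw [← hW, one_div_pow, one_div_mul_eq_div, pow_mul]
  norm_num only
  gcongr
  set D : ℝ := 2 * zeroCount σ - n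
  have hS' : n + S ≤ S * (n + 1 + D ^ 2) := by nlinarith [Nat.cast_nonneg (α := ℝ) n, sq_nonneg D]
  calc 2 + D ^ 2 + W * (n + S) ≤ 2 * (n + 1 + D ^ 2) + W * (S * (n + 1 + D ^ 2)) := by
        gcongr
        nlinarith [Nat.cast_nonneg (α := ℝ) n, sq_nonneg D]
    _ = (2 + W * S) * (n + 1 + D ^ 2) := by ring

/-- For balanced shifts, the full sum over shapes `j ∈ ℕ_{-1}²` (encoded by `k ∈ ℕ²`
via `j = k - (1,1)`) of the `L_{p/2}`-norm terms is `≪_{p,c} n / 2^{2n}`. -/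
theorem statement19 (p : ℝ) (hp : 1 < p) (c : ℝ) (hc : 0 ≤ c) :
    ∃ C : ℝ, 0 < C ∧ ∀ n : ℕ, 0 < n → ∀ σ : Fin n → Bool,
      |2 * (zeroCount σ : ℝ) - n| ≤ c * Real.sqrt n →
      Summable (fun k : ℕ × ℕ =>
        lpHalfTerm p (hammersleyShifted n σ) ((k.1 : ℤ) - 1, (k.2 : ℤ) - 1)) ∧
      (∑' k : ℕ × ℕ,
          lpHalfTerm p (hammersleyShifted n σ) ((k.1 : ℤ) - 1, (k.2 : ℤ) - 1)) ≤
        C * n / 2 ^ (2 * n) := by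
  obtain ⟨C, hC, h⟩ := statement19_general p (zero_lt_one.trans hp)
  refine ⟨C * (2 + c ^ 2), by positivity, fun n hn σ hσ ↦ ⟨(h n σ).1, (h n σ).2.trans ?_⟩⟩
  rw [mul_assoc]
  gcongr
  exact add_one_add_sq_le_of_abs_le_mul_sqrt hn hσ
end
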